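/- arXiv:1412.5090 — 9 statements merged into one kernel-verified Lean document; each statement's English description precedes it below -/
import Mathlib

section
/- Let W be a nonempty finite set and let ≼ be a binary relation on 𝒫(W), writing X ≺ Y for (X ≼ Y and not Y ≼ X). Then there exists a finitely additive probability measure P on 𝒫(W) such that for all X,Y ⊆ W, X ≼ Y iff P(X) ≤ P(Y), if and only if ≼ satisfies: (1) ∅ ≺ W; (2) ∅ ≼ X for all X ⊆ W; (3) for all X,Y ⊆ W, X ≼ Y or Y ≼ X; and (4) for every m ≥ 1 and all X_1,…,X_m,Y_1,…,Y_m ⊆ W, if X_i ≼ Y_i for each i ≤ m and ∑_{i=1}^m ι(X_i) = ∑_{i=1}^m ι(Y_i) as functions W → ℕ, then Y_j ≼ X_j for each j ≤ m. -/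
open Classical

/-!
Scott's condition says that no strict comparison occurs in a list of comparisons whose two sides
have the same sum, i.e. that the difference vector of a strict comparison never has its opposite in
the additive monoid generated by all difference vectors. Clearing denominators, the opposite is not
in the convex cone over `ℚ` either, so Farkas' lemma gives a functional that is monotone and strict
on this comparison. The sum of these finitely many functionals represents the relation; evaluated
on characteristic functions and normalized, it is the desired probability.
-/

open Module

section Cone

theorem nonneg_of_mem_hull {R M : Type*} [Semiring R] [PartialOrder R] [IsOrderedRing R]
    [AddCommMonoid M] [Module R M] {s : Set M} {f : M →ₗ[R] R} (hf : ∀ y ∈ s, 0 ≤ f y) {x : M}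
    (hx : x ∈ PointedCone.hull R s) : 0 ≤ f x :=
  have hle : PointedCone.hull R s ≤ (PointedCone.positive R R).comap f := Submodule.span_le.2 hf
  hle hx

theorem mem_hull_image_of_forall_dual_nonneg {𝕜 V ι : Type*} [Field 𝕜] [LinearOrder 𝕜]
    [IsStrictOrderedRing 𝕜] [AddCommGroup V] [Module 𝕜 V] (s : Finset ι) (a : ι → V) (x : V)
    (h : ∀ f : Dual 𝕜 V, (∀ i ∈ s, 0 ≤ f (a i)) → 0 ≤ f x) :
    x ∈ PointedCone.hull 𝕜 (a '' s) := by
  induction s using Finset.induction_on generalizing a x with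
  | empty =>
    have hx : x = 0 := (forall_dual_apply_eq_zero_iff 𝕜 x).1 fun f =>
      le_antisymm (by simpa using h (-f) (by simp)) (h f (by simp))
    exact hx ▸ zero_mem _
  | insert k s _ ih =>
    have hull_le : PointedCone.hull 𝕜 (a '' s) ≤ PointedCone.hull 𝕜 (a '' ↑(insert k s)) :=
      Submodule.span_mono (Set.image_mono (by simp))
    by_cases hs : ∀ f : Dual 𝕜 V, (∀ i ∈ s, 0 ≤ f (a i)) → 0 ≤ f x
    · exact hull_le (ih a x hs)
    push Not at hs
    obtain ⟨g, hgs, hgx⟩ := hs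
    have hgk : g (a k) < 0 := by
      by_contra! hgk
      exact hgx.not_ge (h g ((Finset.forall_mem_insert _ _ _).2 ⟨hgk, hgs⟩))
    -- The projection onto `ker g` along `a k` eliminates the generator `a k`.
    let T : V →ₗ[𝕜] V := LinearMap.id - ((g (a k))⁻¹ • g).smulRight (a k)
    have hT (v : V) : T v = v - ((g (a k))⁻¹ * g v) • a k := by simp [T]
    have hTk : T (a k) = 0 := by simp [hT, hgk.ne]
    have hTx : T x ∈ PointedCone.hull 𝕜 ((T ∘ a) '' s) := ih (T ∘ a) (T x) fun f hf =>
      h (f ∘ₗ T) ((Finset.forall_mem_insert _ _ _).2 ⟨by simp [hTk], hf⟩)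
    rw [Set.image_comp] at hTx
    obtain ⟨z, hz, hTz⟩ : ∃ z ∈ PointedCone.hull 𝕜 (a '' s), T z = T x :=
      PointedCone.mem_map.1 <| by rwa [PointedCone.map, Submodule.map_span]
    have hgz : 0 ≤ g z := nonneg_of_mem_hull (Set.forall_mem_image.2 hgs) hz
    have hx : x = z + ((g (a k))⁻¹ * (g x - g z)) • a k := by
      rw [hT, hT] at hTz
      linear_combination (norm := module) (-1 : 𝕜) • hTz
    rw [hx]
    refine add_mem (hull_le hz) (PointedCone.smul_mem _ ?_ ?_)
    · exact mul_nonneg_of_nonpos_of_nonpos (inv_nonpos.2 hgk.le) (by linarith)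
    · exact PointedCone.subset_hull ⟨k, by simp, rfl⟩

theorem exists_nsmul_mem_closure_of_mem_hull {V : Type*} [AddCommMonoid V] [Module ℚ V]
    {s : Set V} {x : V} (hx : x ∈ PointedCone.hull ℚ s) :
    ∃ n : ℕ, n ≠ 0 ∧ n • x ∈ AddSubmonoid.closure s := by
  induction hx using Submodule.span_induction with
  | mem x hx => exact ⟨1, one_ne_zero, by simpa using AddSubmonoid.subset_closure hx⟩
  | zero => exact ⟨1, one_ne_zero, by simp⟩
  | add x y _ _ hx hy =>
    obtain ⟨m, hm, hmx⟩ := hx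
    obtain ⟨n, hn, hny⟩ := hy
    refine ⟨m * n, mul_ne_zero hm hn, ?_⟩
    rw [smul_add, mul_smul, mul_smul, smul_comm m n x]
    exact add_mem (nsmul_mem hmx n) (nsmul_mem hny m)
  | smul c x _ hx =>
    obtain ⟨n, hn, hnx⟩ := hx
    obtain ⟨q, hq⟩ := c
    lift q to ℚ≥0 using hq
    have hclear : ((q.den * n : ℕ) : ℚ) * q = (q.num * n : ℕ) := by
      have hnum : (q.den : ℚ) * q = q.num := mod_cast q.den_mul_eq_num
      rw [Nat.cast_mul, mul_right_comm, hnum, Nat.cast_mul]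
    refine ⟨q.den * n, mul_ne_zero q.den_ne_zero hn, ?_⟩
    have hsmul : (q.den * n) • (q : ℚ) • x = q.num • n • x := by
      rw [← Nat.cast_smul_eq_nsmul ℚ, smul_smul, hclear, Nat.cast_smul_eq_nsmul, mul_smul]
    exact hsmul ▸ nsmul_mem hnx _

end Cone

/-- The vectors `v y - v x` for all comparisons `le x y`. -/
def comparisonDifferences {ι M : Type*} [AddCommGroup M] (v : ι → M) (le : ι → ι → Prop) : Set M :=
  {d | ∃ x y, le x y ∧ v y - v x = d}

/-- Scott's cancellation condition, for a relation on the index set of a family of vectors: a list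
of comparisons whose two sides have equal sums consists of equivalences. -/
def ScottCancellation {ι M : Type*} [AddCommMonoid M] (v : ι → M) (le : ι → ι → Prop) : Prop :=
  ∀ (m : ℕ) (x y : Fin m → ι), (∀ i, le (x i) (y i)) → ∑ i, v (x i) = ∑ i, v (y i) →
    ∀ j, le (y j) (x j)

namespace ScottCancellation

theorem of_forall_le_iff {ι M N : Type*} [AddCommMonoid M] [AddCommMonoid N] [PartialOrder N]
    [IsOrderedCancelAddMonoid N] {v : ι → M} {le : ι → ι → Prop} (f : M →+ N)
    (hf : ∀ a b, le a b ↔ f (v a) ≤ f (v b)) : ScottCancellation v le := by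
  intro m x y hxy hsum j
  have hle : ∀ i ∈ Finset.univ, f (v (x i)) ≤ f (v (y i)) := fun i _ => (hf _ _).1 (hxy i)
  have hfsum : ∑ i, f (v (x i)) = ∑ i, f (v (y i)) := by
    rw [← map_sum, ← map_sum, hsum]
  exact (hf _ _).2 ((Finset.sum_eq_sum_iff_of_le hle).1 hfsum j (Finset.mem_univ j)).ge

theorem le_of_sub_mem_closure {ι M : Type*} [AddCommGroup M] {v : ι → M} {le : ι → ι → Prop}
    (h : ScottCancellation v le) {a b : ι} (hab : le a b)
    (hmem : v a - v b ∈ AddSubmonoid.closure (comparisonDifferences v le)) : le b a := by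
  obtain ⟨l, hl, hsum⟩ := AddSubmonoid.exists_list_of_mem_closure hmem
  choose x y hxy hd using fun i : Fin l.length => hl l[i] (l.getElem_mem i.2)
  have hdiff : ∑ i, v (y i) - ∑ i, v (x i) = v a - v b := by
    rw [← Finset.sum_sub_distrib, ← hsum, ← Fin.sum_univ_getElem]
    exact Finset.sum_congr rfl fun i _ => hd i
  refine h _ (Fin.cons a x) (Fin.cons b y) (Fin.cases hab hxy) ?_ 0
  simp only [Fin.sum_univ_succ, Fin.cons_zero, Fin.cons_succ]
  rw [add_comm (v b)]
  exact sub_eq_sub_iff_add_eq_add.1 hdiff.symm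

variable {ι V : Type*} [Finite ι] [AddCommGroup V] [Module ℚ V] {v : ι → V} {le : ι → ι → Prop}

theorem exists_dual_monotone_lt (h : ScottCancellation v le) {a b : ι} (hab : le a b)
    (hba : ¬ le b a) :
    ∃ f : Dual ℚ V, (∀ x y, le x y → f (v x) ≤ f (v y)) ∧ f (v a) < f (v b) := by
  have := Fintype.ofFinite ι
  by_contra! hcon
  have himage : (fun q : ι × ι => v q.2 - v q.1) ''
      ↑(Finset.univ.filter fun q : ι × ι => le q.1 q.2) = comparisonDifferences v le := by
    ext; simp [comparisonDifferences]
  have hcone : v a - v b ∈ PointedCone.hull ℚ (comparisonDifferences v le) := by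
    rw [← himage]
    refine mem_hull_image_of_forall_dual_nonneg _ _ _ fun f hf => ?_
    rw [map_sub, sub_nonneg]
    exact hcon f fun x y hxy => by simpa using hf (x, y) (by simpa using hxy)
  obtain ⟨n, hn, hnmem⟩ := exists_nsmul_mem_closure_of_mem_hull hcone
  obtain ⟨k, rfl⟩ := Nat.exists_eq_succ_of_ne_zero hn
  have hmem : v a - v b ∈ AddSubmonoid.closure (comparisonDifferences v le) := by
    have hba_mem : v b - v a ∈ comparisonDifferences v le := ⟨a, b, hab, rfl⟩
    have hk := nsmul_mem (AddSubmonoid.subset_closure hba_mem) k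
    have hsplit : v a - v b = (k + 1) • (v a - v b) + k • (v b - v a) := by module
    exact hsplit ▸ add_mem hnmem hk
  exact hba (h.le_of_sub_mem_closure hab hmem)

theorem exists_dual_forall_le_iff (h : ScottCancellation v le) (htotal : ∀ a b, le a b ∨ le b a) :
    ∃ f : Dual ℚ V, ∀ a b, le a b ↔ f (v a) ≤ f (v b) := by
  have := Fintype.ofFinite ι
  have hsep (q : ι × ι) : ∃ f : Dual ℚ V, (∀ x y, le x y → f (v x) ≤ f (v y)) ∧
      (¬ le q.2 q.1 → f (v q.1) < f (v q.2)) := by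
    by_cases hq : le q.2 q.1
    · exact ⟨0, by simp, fun hn => absurd hq hn⟩
    · obtain ⟨f, hmono, hlt⟩ := h.exists_dual_monotone_lt ((htotal _ _).resolve_right hq) hq
      exact ⟨f, hmono, fun _ => hlt⟩
  choose f hmono hlt using hsep
  refine ⟨∑ q, f q, fun a b => ⟨fun hab => ?_, fun hab => ?_⟩⟩
  · simp only [LinearMap.sum_apply]
    exact Finset.sum_le_sum fun q _ => hmono q a b hab
  · contrapose! hab
    simp only [LinearMap.sum_apply]
    exact Finset.sum_lt_sum (fun q _ => hmono q b a ((htotal a b).resolve_left hab))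
      ⟨(b, a), Finset.mem_univ _, hlt (b, a) hab⟩

end ScottCancellation

section SetFunction

variable {W : Type*}

theorem scottCancellation_indicator_iff {R : Type*} [Semiring R] [CharZero R]
    {le : Set W → Set W → Prop} :
    ScottCancellation (fun X : Set W => X.indicator (1 : W → R)) le ↔
      ∀ m : ℕ, 1 ≤ m → ∀ X Y : Fin m → Set W, (∀ i, le (X i) (Y i)) →
        (∀ w : W, (Finset.univ.filter (fun i => w ∈ X i)).card =
          (Finset.univ.filter (fun i => w ∈ Y i)).card) →
        ∀ j, le (Y j) (X j) := by
  have sum_eq_iff {m : ℕ} (X Y : Fin m → Set W) :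
      ∑ i, (X i).indicator (1 : W → R) = ∑ i, (Y i).indicator 1 ↔
        ∀ w : W, (Finset.univ.filter (fun i => w ∈ X i)).card =
          (Finset.univ.filter (fun i => w ∈ Y i)).card := by
    simp [funext_iff, Set.indicator_apply]
  simp only [ScottCancellation, sum_eq_iff]
  exact ⟨fun h m _ => h m, fun h m X Y hXY hcard j => h m j.pos X Y hXY hcard j⟩

theorem indicator_union_eq_add {M : Type*} [AddZeroClass M] {X Y : Set W} (hXY : X ∩ Y = ∅)
    (f : W → M) : (X ∪ Y).indicator f = X.indicator f + Y.indicator f :=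
  Set.indicator_union_of_disjoint (Set.disjoint_iff_inter_eq_empty.2 hXY) f

theorem map_empty_of_additive {G : Type*} [AddCancelCommMonoid G] {P : Set W → G}
    (hadd : ∀ X Y : Set W, X ∩ Y = ∅ → P (X ∪ Y) = P X + P Y) : P ∅ = 0 := by
  simpa using hadd ∅ ∅ (Set.inter_self ∅)

theorem exists_linearMap_indicator_eq [Finite W] (R : Type*) {G : Type*} [Semiring R]
    [AddCancelCommMonoid G] [Module R G] {P : Set W → G}
    (hadd : ∀ X Y : Set W, X ∩ Y = ∅ → P (X ∪ Y) = P X + P Y) :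
    ∃ f : (W → R) →ₗ[R] G, ∀ X : Set W, f (X.indicator 1) = P X := by
  have := Fintype.ofFinite W
  refine ⟨Fintype.linearCombination R fun w => P {w}, fun X => ?_⟩
  induction X, X.toFinite using Set.Finite.induction_on with
  | empty => rw [Set.indicator_empty', map_zero, map_empty_of_additive hadd]
  | @insert w X hw _ ih =>
    have hdisj : {w} ∩ X = ∅ := Set.singleton_inter_eq_empty.2 hw
    rw [Set.insert_eq, indicator_union_eq_add hdisj, hadd _ _ hdisj, map_add, ih]
    simp [Fintype.linearCombination_apply]

variable {𝕜 : Type*} [Field 𝕜] [LinearOrder 𝕜] [IsStrictOrderedRing 𝕜]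

theorem exists_additive_forall_le_iff [Finite W] {le : Set W → Set W → Prop}
    (htotal : ∀ X Y, le X Y ∨ le Y X)
    (hcancel : ScottCancellation (fun X : Set W => X.indicator (1 : W → ℚ)) le) :
    ∃ Q : Set W → 𝕜, (∀ X Y : Set W, X ∩ Y = ∅ → Q (X ∪ Y) = Q X + Q Y) ∧
      ∀ X Y, le X Y ↔ Q X ≤ Q Y := by
  obtain ⟨f, hf⟩ := hcancel.exists_dual_forall_le_iff htotal
  refine ⟨fun X => (f (X.indicator 1) : 𝕜), fun X Y hXY => ?_, fun X Y => ?_⟩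
  · simp only [indicator_union_eq_add hXY, map_add, Rat.cast_add]
  · rw [hf, Rat.cast_le]

theorem exists_probability_of_additive {Q : Set W → 𝕜}
    (hadd : ∀ X Y : Set W, X ∩ Y = ∅ → Q (X ∪ Y) = Q X + Q Y) (hnonneg : ∀ X, 0 ≤ Q X)
    (hpos : 0 < Q Set.univ) :
    ∃ P : Set W → 𝕜,
      (∀ X : Set W, 0 ≤ P X) ∧ (∀ X : Set W, P X ≤ 1) ∧ P Set.univ = 1 ∧
      (∀ X Y : Set W, X ∩ Y = ∅ → P (X ∪ Y) = P X + P Y) ∧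
      (∀ X Y : Set W, Q X ≤ Q Y ↔ P X ≤ P Y) := by
  have hle (X : Set W) : Q X ≤ Q Set.univ := by
    rw [← Set.union_compl_self X, hadd X Xᶜ (Set.inter_compl_self X)]
    exact le_add_of_nonneg_right (hnonneg Xᶜ)
  exact ⟨fun X => Q X / Q Set.univ, fun X => div_nonneg (hnonneg X) hpos.le,
    fun X => (div_le_one hpos).2 (hle X), div_self hpos.ne',
    fun X Y hXY => by simp only [hadd X Y hXY, add_div],
    fun X Y => (div_le_div_iff_of_pos_right hpos).symm⟩

end SetFunction

theorem scott_realizability_general {W : Type*} [Finite W] {𝕜 : Type*} [Field 𝕜] [LinearOrder 𝕜]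
    [IsStrictOrderedRing 𝕜] (le : Set W → Set W → Prop) :
    (∃ P : Set W → 𝕜,
      (∀ X : Set W, 0 ≤ P X) ∧ (∀ X : Set W, P X ≤ 1) ∧ P Set.univ = 1 ∧
      (∀ X Y : Set W, X ∩ Y = ∅ → P (X ∪ Y) = P X + P Y) ∧
      (∀ X Y : Set W, le X Y ↔ P X ≤ P Y)) ↔
    ((le ∅ Set.univ ∧ ¬ le Set.univ ∅) ∧
     (∀ X : Set W, le ∅ X) ∧
     (∀ X Y : Set W, le X Y ∨ le Y X) ∧
     (∀ m : ℕ, 1 ≤ m → ∀ X Y : Fin m → Set W,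
       (∀ i, le (X i) (Y i)) →
       (∀ w : W, (Finset.univ.filter (fun i => w ∈ X i)).card =
                 (Finset.univ.filter (fun i => w ∈ Y i)).card) →
       ∀ j, le (Y j) (X j))) := by
  constructor
  · rintro ⟨P, hnonneg, _, huniv, hadd, hle⟩
    have hempty : P ∅ = 0 := map_empty_of_additive hadd
    obtain ⟨f, hf⟩ := exists_linearMap_indicator_eq 𝕜 hadd
    have hcancel : ScottCancellation (fun X : Set W => X.indicator (1 : W → 𝕜)) le :=
      .of_forall_le_iff f.toAddMonoidHom fun X Y => by simpa [hf] using hle X Y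
    exact ⟨by simp [hle, hempty, huniv], by simpa [hle, hempty] using hnonneg,
      by simp [hle, le_total], scottCancellation_indicator_iff.1 hcancel⟩
  · rintro ⟨⟨_, hnontrivial⟩, hempty, htotal, hcancel⟩
    obtain ⟨Q, hadd, hle⟩ := exists_additive_forall_le_iff (𝕜 := 𝕜) htotal
      (scottCancellation_indicator_iff.2 hcancel)
    have hQempty : Q ∅ = 0 := map_empty_of_additive hadd
    have hnonneg (X : Set W) : 0 ≤ Q X := hQempty ▸ (hle ∅ X).1 (hempty X)
    have hpos : 0 < Q Set.univ := by rwa [hle, not_le, hQempty] at hnontrivial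
    simpa only [hle] using exists_probability_of_additive hadd hnonneg hpos

/-- Kraft–Pratt–Seidenberg/Scott: a binary relation `≼` on `𝒫(W)` is realizable by a
finitely additive probability measure iff it satisfies the four Scott conditions. -/
theorem scott_realizability {W : Type} [Finite W] [Nonempty W]
    (le : Set W → Set W → Prop) :
    (∃ P : Set W → ℝ,
      (∀ X : Set W, 0 ≤ P X) ∧ (∀ X : Set W, P X ≤ 1) ∧ P Set.univ = 1 ∧
      (∀ X Y : Set W, X ∩ Y = ∅ → P (X ∪ Y) = P X + P Y) ∧
      (∀ X Y : Set W, le X Y ↔ P X ≤ P Y)) ↔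
    ((le ∅ Set.univ ∧ ¬ le Set.univ ∅) ∧
     (∀ X : Set W, le ∅ X) ∧
     (∀ X Y : Set W, le X Y ∨ le Y X) ∧
     (∀ m : ℕ, 1 ≤ m → ∀ X Y : Fin m → Set W,
       (∀ i, le (X i) (Y i)) →
       (∀ w : W, (Finset.univ.filter (fun i => w ∈ X i)).card =
                 (Finset.univ.filter (fun i => w ∈ Y i)).card) →
       ∀ j, le (Y j) (X j))) :=
  scott_realizability_general le
end

section
/- Let S be a finite nonempty set, let L(S) be the real vector space of functions S → ℝ with pointwise addition and scalar multiplication, and let X ⊆ L(S) be a finite set of vectors all of whose coordinates are rational and satisfying X = −X (symmetry). For N ⊆ X there exists a linear functional f : L(S) → ℝ such that N = {x ∈ X : f(x) ≥ 0} if and only if: (i) for each x ∈ X, x ∈ N or −x ∈ N; and (ii) for every integer n ≥ 0 and all x_0,…,x_n ∈ N with x_0 + ⋯ + x_n = 0, one has −x_0 ∈ N. -/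
open Classical

/-!
For a finite family of vectors in a `ℚ`-vector space, Farkas' lemma says that a vector outside the
cone generated by the family is strictly separated from it by a linear functional. If `x ∈ N` and
`-x ∉ N`, then `-x` is outside the cone generated by `N`: clearing denominators in a conical
combination equal to `-x` would give a vanishing sum of members of `N`, one of which is `x`,
contradicting (ii).
Adding up the functionals that Farkas' lemma provides for these finitely many `x`, one finds a
single rational functional that is nonnegative on `N` and positive at each `x ∈ N` with `-x ∉ N`.
On a finite-dimensional space of functions every functional is a combination of evaluations at
points, so this one extends from rational to real vectors.
-/

open Module PointedCone

section Farkas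

variable {K V : Type*} [Field K] [LinearOrder K] [IsStrictOrderedRing K] [AddCommGroup V]
  [Module K V]

theorem mem_hull_insert_of_preReflection_mem {A : Set V} {a b : V} {f : Dual K V}
    (hfA : ∀ x ∈ A, f x ≤ 0) (hfb : 0 ≤ f b)
    (hb : preReflection a f b ∈ hull K (preReflection a f '' A)) : b ∈ hull K (insert a A) := by
  obtain ⟨c, hc, hcb⟩ : ∃ c ∈ hull K A, preReflection a f c = preReflection a f b := by
    rwa [hull, ← LinearMap.coe_restrictScalars (R := {r : K // 0 ≤ r}), Submodule.span_image,
      Submodule.mem_map] at hb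
  have hfc : f c ≤ 0 := by
    have hdual : -f ∈ dual (Dual.eval K V) (hull K A) := by
      rw [dual_hull]
      simpa using hfA
    simpa using hdual hc
  have hb_eq : b = c + (f b - f c) • a := by
    rw [preReflection_apply, preReflection_apply] at hcb
    linear_combination (norm := module) (-1 : K) • hcb
  rw [hb_eq]
  exact add_mem (Submodule.span_mono (Set.subset_insert a A) hc)
    (PointedCone.smul_mem _ (by linarith) (subset_hull (Set.mem_insert a A)))

theorem mem_hull_image_or_exists_dual_neg {ι : Type*} (s : Finset ι) (a : ι → V) (b : V) :
    b ∈ hull K (a '' s) ∨ ∃ f : Dual K V, (∀ i ∈ s, 0 ≤ f (a i)) ∧ f b < 0 := by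
  induction s using Finset.induction_on generalizing a b with
  | empty =>
    by_cases hb : b = 0
    · exact .inl (hb ▸ zero_mem _)
    · obtain ⟨f, hf⟩ := Projective.exists_dual_eq_one K hb
      exact .inr ⟨-f, by simp, by simp [hf]⟩
  | insert j s _ ih =>
    rw [Finset.coe_insert, Set.image_insert_eq]
    rcases ih a b with hb | ⟨f, hfs, hfb⟩
    · exact .inl (Submodule.span_mono (Set.subset_insert _ _) hb)
    rcases le_or_gt 0 (f (a j)) with hfj | hfj
    · exact .inr ⟨f, Finset.forall_mem_insert _ _ _ |>.2 ⟨hfj, hfs⟩, hfb⟩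
    -- As `g (a j) = 1`, `preReflection (a j) g` is the projection onto `ker g` along `a j`:
    -- the induction hypothesis is applied once more to the projected family.
    let g : Dual K V := (f (a j))⁻¹ • f
    have hinv : (f (a j))⁻¹ < 0 := inv_lt_zero.2 hfj
    have hgj : g (a j) = 1 := inv_mul_cancel₀ hfj.ne
    rcases ih (preReflection (a j) g ∘ a) (preReflection (a j) g b) with hb | ⟨h, hhs, hhb⟩
    · left
      rw [Set.image_comp] at hb
      refine mem_hull_insert_of_preReflection_mem ?_ (mul_pos_of_neg_of_neg hinv hfb).le hb
      rintro _ ⟨i, hi, rfl⟩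
      exact mul_nonpos_of_nonpos_of_nonneg hinv.le (hfs i hi)
    · refine .inr ⟨h ∘ₗ preReflection (a j) g, Finset.forall_mem_insert _ _ _ |>.2 ⟨?_, hhs⟩, hhb⟩
      simp [preReflection_apply, hgj]

theorem exists_dual_nonneg_and_pos_of_neg_notMem_hull {A : Set V} (hA : A.Finite) :
    ∃ f : Dual K V, ∀ x ∈ A, 0 ≤ f x ∧ (-x ∉ hull K A → 0 < f x) := by
  have hsep (x : V) : ∃ f : Dual K V, (∀ y ∈ A, 0 ≤ f y) ∧ (-x ∉ hull K A → 0 < f x) := by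
    rcases mem_hull_image_or_exists_dual_neg (K := K) hA.toFinset id (-x) with hx | ⟨f, hfA, hfx⟩
    · exact ⟨0, by simp, fun hx' => (hx' (by simpa using hx)).elim⟩
    · exact ⟨f, by simpa using hfA, fun _ => by simpa using hfx⟩
  choose f hf hfpos using hsep
  refine ⟨∑ x ∈ hA.toFinset, f x, fun x hx => ?_⟩
  rw [LinearMap.sum_apply]
  exact ⟨Finset.sum_nonneg fun y _ => hf y x hx, fun hx' =>
    Finset.sum_pos' (fun y _ => hf y x hx) ⟨x, hA.mem_toFinset.2 hx, hfpos x hx'⟩⟩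

end Farkas

section ExtensionOfScalars

theorem span_range_proj_domRestrict_eq_top {k S : Type*} [Field k] (W : Submodule k (S → k))
    [FiniteDimensional k W] :
    Submodule.span k (Set.range fun s : S => (LinearMap.proj s).domRestrict W) =
      (⊤ : Submodule k (Dual k W)) := by
  set Φ := Submodule.span k (Set.range fun s : S =>
    ((LinearMap.proj s : (S → k) →ₗ[k] k).domRestrict W : Dual k W))
  have hbot : Φ.dualCoannihilator = ⊥ := by
    refine (Submodule.eq_bot_iff _).2 fun w hw => Subtype.ext <| funext fun s => ?_
    exact (Submodule.mem_dualCoannihilator w).1 hw _ (Submodule.subset_span ⟨s, rfl⟩)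
  rw [← Subspace.dualCoannihilator_dualAnnihilator_eq (W := Φ), hbot,
    Submodule.dualAnnihilator_bot]

theorem exists_dual_algebraMap_comp_eq {k R S : Type*} [Field k] [CommSemiring R] [Algebra k R]
    (W : Submodule k (S → k)) [FiniteDimensional k W] (g : Dual k (S → k)) :
    ∃ F : Dual R (S → R), ∀ v ∈ W, F (algebraMap k R ∘ v) = algebraMap k R (g v) := by
  obtain ⟨c, hc⟩ := Finsupp.mem_span_range_iff_exists_finsupp.1 <|
    (span_range_proj_domRestrict_eq_top W).ge (Submodule.mem_top (x := g.domRestrict W))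
  refine ⟨c.sum fun s r => algebraMap k R r • LinearMap.proj s, fun v hv => ?_⟩
  have hgv : c.sum (fun s r => r * v s) = g v := by
    simpa [Finsupp.sum] using LinearMap.congr_fun hc ⟨v, hv⟩
  simp [← hgv, Finsupp.sum, Algebra.smul_def]

end ExtensionOfScalars

section Cancellation

variable {G : Type*} [AddCommGroup G] {N : Set G}

/-- Scott's cancellation condition on `N`: whenever finitely many members of `N`, possibly with
repetitions, sum to zero, the negative of the first one is in `N`. By symmetry of the sum, the same
then holds for each of them. -/
def IsZeroSumCancelling (N : Set G) : Prop :=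
  ∀ n : ℕ, ∀ x : Fin (n + 1) → G, (∀ i, x i ∈ N) → ∑ i, x i = 0 → -x 0 ∈ N

theorem IsZeroSumCancelling.neg_mem (hN : IsZeroSumCancelling N) {x : G} (hx : x ∈ N)
    (hneg : -x ∈ AddSubmonoid.closure N) : -x ∈ N := by
  obtain ⟨l, hl, hsum⟩ := AddSubmonoid.exists_list_of_mem_closure hneg
  refine hN l.length (x :: l).get (fun i => ?_) ?_
  · exact List.forall_mem_cons.2 ⟨hx, hl⟩ _ (List.get_mem (x :: l) i)
  · calc ∑ i, (x :: l).get i = (x :: l).sum := by rw [← List.sum_ofFn, List.ofFn_get]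
      _ = 0 := by rw [List.sum_cons, hsum, add_neg_cancel]

theorem IsZeroSumCancelling.preimage {H : Type*} [AddCommGroup H] (hN : IsZeroSumCancelling N)
    (φ : H →+ G) : IsZeroSumCancelling (φ ⁻¹' N) := fun n x hx hsum => by
  rw [Set.mem_preimage, map_neg]
  exact hN n (φ ∘ x) hx (by simp [← map_sum, hsum])

theorem isZeroSumCancelling_setOf_nonneg {R : Type*} [AddCommGroup R] [PartialOrder R]
    [IsOrderedAddMonoid R] {X : Set G} (hX : ∀ x ∈ X, -x ∈ X) (f : G →+ R) :
    IsZeroSumCancelling {x ∈ X | 0 ≤ f x} := fun n x hx hsum => by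
  have hfsum : ∑ i, f (x i) = 0 := by rw [← map_sum, hsum, map_zero]
  have hf0 : f (x 0) = 0 :=
    (Finset.sum_eq_zero_iff_of_nonneg fun i _ => (hx i).2).1 hfsum 0 (Finset.mem_univ _)
  exact ⟨hX _ (hx 0).1, by simp [hf0]⟩

theorem exists_succ_nsmul_mem_closure_of_mem_hull {V : Type*} [AddCommGroup V] [Module ℚ V]
    {A : Set V} {v : V} (hv : v ∈ hull ℚ A) : ∃ n : ℕ, (n + 1) • v ∈ AddSubmonoid.closure A := by
  suffices ∃ n > 0, n • v ∈ AddSubmonoid.closure A by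
    obtain ⟨n, hn, hnv⟩ := this
    exact ⟨n - 1, by rwa [Nat.sub_add_cancel hn]⟩
  induction hv using Submodule.span_induction with
  | mem x hx => exact ⟨1, one_pos, by simpa using AddSubmonoid.subset_closure hx⟩
  | zero => exact ⟨1, one_pos, by simp⟩
  | add x y _ _ hx hy =>
    obtain ⟨m, hm, hmx⟩ := hx
    obtain ⟨n, hn, hny⟩ := hy
    refine ⟨m * n, mul_pos hm hn, ?_⟩
    rw [smul_add, mul_nsmul, mul_nsmul']
    exact add_mem (nsmul_mem hmx n) (nsmul_mem hny m)
  | smul r x _ hx =>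
    obtain ⟨n, hn, hnx⟩ := hx
    obtain ⟨q, hq⟩ : ∃ q : ℚ≥0, (q : ℚ) = r := ⟨⟨r, r.2⟩, rfl⟩
    refine ⟨n * q.den, mul_pos hn q.den_pos, ?_⟩
    have hden : q.den • r • x = q.num • x := by
      rw [← Nat.cast_smul_eq_nsmul ℚ, ← Nat.cast_smul_eq_nsmul ℚ, Nonneg.mk_smul, ← hq, smul_smul]
      congr 1
      exact_mod_cast q.den_mul_eq_num
    rw [mul_nsmul', hden, nsmul_left_comm]
    exact nsmul_mem hnx _

theorem IsZeroSumCancelling.exists_rat_dual {V : Type*} [AddCommGroup V] [Module ℚ V] {N : Set V}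
    (hN : IsZeroSumCancelling N) (hfin : N.Finite) :
    ∃ g : Dual ℚ V, ∀ x ∈ N, 0 ≤ g x ∧ (-x ∉ N → 0 < g x) := by
  obtain ⟨g, hg⟩ := exists_dual_nonneg_and_pos_of_neg_notMem_hull (K := ℚ) hfin
  refine ⟨g, fun x hx => ⟨(hg x hx).1, fun hxN => (hg x hx).2 fun hcone => hxN ?_⟩⟩
  obtain ⟨n, hn⟩ := exists_succ_nsmul_mem_closure_of_mem_hull hcone
  refine hN.neg_mem hx ?_
  have hneg : -x = (n + 1) • -x + n • x := by module
  rw [hneg]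
  exact add_mem hn (nsmul_mem (AddSubmonoid.subset_closure hx) n)

theorem IsZeroSumCancelling.exists_dual {K S : Type*} [Field K] [LinearOrder K]
    [IsStrictOrderedRing K] {N : Set (S → K)} (hN : IsZeroSumCancelling N) (hfin : N.Finite)
    (hrat : ∀ x ∈ N, ∀ s, ∃ q : ℚ, x s = q) :
    ∃ f : Dual K (S → K), ∀ x ∈ N, 0 ≤ f x ∧ (-x ∉ N → 0 < f x) := by
  let φ : (S → ℚ) →+ (S → K) := (algebraMap ℚ K).toAddMonoidHom.compLeft S
  have hφ : Function.Injective φ := (algebraMap ℚ K).injective.comp_left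
  have hfin' : (φ ⁻¹' N).Finite := hfin.preimage hφ.injOn
  obtain ⟨g, hg⟩ := (hN.preimage φ).exists_rat_dual hfin'
  have := FiniteDimensional.span_of_finite ℚ hfin'
  obtain ⟨f, hf⟩ := exists_dual_algebraMap_comp_eq (R := K) (Submodule.span ℚ (φ ⁻¹' N)) g
  refine ⟨f, fun x hx => ?_⟩
  choose v hv using hrat x hx
  obtain rfl : φ v = x := funext fun s => (eq_ratCast (algebraMap ℚ K) (v s)).trans (hv s).symm
  have hfv : f (φ v) = g v := (hf v (Submodule.subset_span hx)).trans (eq_ratCast _ _)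
  rw [hfv, Rat.cast_nonneg, Rat.cast_pos, ← map_neg]
  exact hg v hx

end Cancellation

theorem scott_separation_general {K S : Type*} [Field K] [LinearOrder K] [IsStrictOrderedRing K]
    (X : Set (S → K)) (hfin : X.Finite) (hrat : ∀ x ∈ X, ∀ s, ∃ q : ℚ, x s = (q : K))
    (hsym : X = -X) (N : Set (S → K)) (hN : N ⊆ X) :
    (∃ f : (S → K) →ₗ[K] K, N = {x ∈ X | 0 ≤ f x}) ↔
      (∀ x ∈ X, x ∈ N ∨ -x ∈ N) ∧ IsZeroSumCancelling N := by
  have hneg : ∀ x ∈ X, -x ∈ X := fun x hx => Set.mem_neg.1 (hsym ▸ hx)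
  constructor
  · rintro ⟨f, rfl⟩
    refine ⟨fun x hx => ?_, isZeroSumCancelling_setOf_nonneg hneg f.toAddMonoidHom⟩
    exact (le_total 0 (f x)).imp (⟨hx, ·⟩) fun h => ⟨hneg x hx, by simpa using h⟩
  · rintro ⟨htotal, hcancel⟩
    obtain ⟨f, hf⟩ := hcancel.exists_dual (hfin.subset hN) fun x hx => hrat x (hN hx)
    refine ⟨f, Set.Subset.antisymm (fun x hx => ⟨hN hx, (hf x hx).1⟩) ?_⟩
    rintro x ⟨hx, hfx⟩
    by_contra hxN
    have hpos : 0 < f (-x) :=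
      (hf _ ((htotal x hx).resolve_left hxN)).2 (by rwa [neg_neg])
    rw [map_neg] at hpos
    linarith

/-- Scott's separation theorem: for a finite, rational, symmetric set `X` of vectors in
`L(S)` and `N ⊆ X`, there is a linear functional realizing `N` iff the two stated
conditions hold. -/
theorem scott_separation {S : Type} [Finite S] [Nonempty S]
    (X : Set (S → ℝ)) (hfin : X.Finite)
    (hrat : ∀ x ∈ X, ∀ s : S, ∃ q : ℚ, x s = (q : ℝ))
    (hsym : X = -X)
    (N : Set (S → ℝ)) (hN : N ⊆ X) :
    (∃ f : (S → ℝ) →ₗ[ℝ] ℝ, N = {x ∈ X | 0 ≤ f x}) ↔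
    ((∀ x ∈ X, x ∈ N ∨ -x ∈ N) ∧
     (∀ n : ℕ, ∀ x : Fin (n + 1) → (S → ℝ),
       (∀ i, x i ∈ N) → (∑ i, x i) = 0 → -(x 0) ∈ N)) :=
  scott_separation_general X hfin hrat hsym N hN
end

section
/- Let c ∈ (0, 1/2] ∩ ℚ and let M = (W,R,V,P) be an epistemic probability model. For every w ∈ W and all X,Y ⊆ W: if P_w(X) ≥ 1 − c and there exists v ∈ [w] with v ∉ X and v ∈ Y, then P_w(X ∪ Y) > c. (This is the validity of the scheme (SC): if φ is consistent with the agent's threshold-c beliefs and ¬φ ∧ ψ is consistent with her knowledge, then she believes φ ∨ ψ with threshold c.) -/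
open Classical

/-- An epistemic probability model: finite nonempty world set, S5 (equivalence)
accessibility relation, valuation, and a finitely additive probability measure
with full support. -/
structure EPM (W A : Type) where
  finite : Finite W
  nonempty : Nonempty W
  R : W → W → Prop
  equiv : Equivalence R
  V : W → Set A
  P : Set W → ℝ
  nonneg : ∀ X : Set W, 0 ≤ P X
  le_one : ∀ X : Set W, P X ≤ 1
  norm : P Set.univ = 1
  add : ∀ X Y : Set W, X ∩ Y = ∅ → P (X ∪ Y) = P X + P Y
  full : ∀ w : W, 0 < P {w}

/-- The equivalence class `[w]` of a world. -/
def EPM.cl {W A : Type} (M : EPM W A) (w : W) : Set W := {v | M.R w v}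

/-- `P_w(X) := P(X ∩ [w]) / P([w])`. -/
noncomputable def EPM.Pw {W A : Type} (M : EPM W A) (w : W) (X : Set W) : ℝ :=
  M.P (X ∩ M.cl w) / M.P (M.cl w)

/-- A positive charge: a nonnegative, finitely additive function on all subsets of `α`, as is
the measure of an epistemic probability model. -/
structure IsCharge {α R : Type*} [AddCommMonoid R] [LE R] (P : Set α → R) : Prop where
  nonneg (X : Set α) : 0 ≤ P X
  union_of_disjoint {X Y : Set α} : Disjoint X Y → P (X ∪ Y) = P X + P Y

/-- The conditional mass `P(X ∣ B)`, of which `EPM.Pw` is the case `B = [w]`. It is `0` for all `X`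
when `P B = 0`. -/
def condMass {α 𝕜 : Type*} [Div 𝕜] (P : Set α → 𝕜) (B X : Set α) : 𝕜 :=
  P (X ∩ B) / P B

namespace IsCharge

section OrderedAddCommMonoid

variable {α R : Type*} [AddCommMonoid R] [Preorder R] {P : Set α → R}

theorem union_eq_add_diff (hP : IsCharge P) (X Y : Set α) : P (X ∪ Y) = P X + P (Y \ X) := by
  rw [← Set.union_sdiff_self, hP.union_of_disjoint Set.disjoint_sdiff_right]

theorem mono [AddLeftMono R] (hP : IsCharge P) {X Y : Set α} (hXY : X ⊆ Y) : P X ≤ P Y :=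
  calc P X ≤ P X + P (Y \ X) := le_add_of_nonneg_right (hP.nonneg _)
    _ = P (X ∪ Y) := (hP.union_eq_add_diff X Y).symm
    _ = P Y := by rw [Set.union_eq_self_of_subset_left hXY]

end OrderedAddCommMonoid

section LinearOrderedField

variable {α 𝕜 : Type*} [Field 𝕜] [LinearOrder 𝕜] [IsStrictOrderedRing 𝕜]
  {P : Set α → 𝕜} {B X Y : Set α}

theorem isCharge_condMass (hP : IsCharge P) (B : Set α) : IsCharge (condMass P B) where
  nonneg X := div_nonneg (hP.nonneg _) (hP.nonneg _)
  union_of_disjoint {X Y} hXY := by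
    have hB : Disjoint (X ∩ B) (Y ∩ B) := hXY.mono Set.inter_subset_left Set.inter_subset_left
    simp only [condMass, Set.union_inter_distrib_right, hP.union_of_disjoint hB, add_div]

theorem condMass_pos (hP : IsCharge P) (hX : 0 < P (X ∩ B)) : 0 < condMass P B X :=
  div_pos hX (hX.trans_le (hP.mono Set.inter_subset_right))

theorem condMass_lt_condMass_union (hP : IsCharge P) (hYX : 0 < P ((Y \ X) ∩ B)) :
    condMass P B X < condMass P B (X ∪ Y) := by
  rw [(hP.isCharge_condMass B).union_eq_add_diff]
  exact lt_add_of_pos_right _ (hP.condMass_pos hYX)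

end LinearOrderedField

end IsCharge

theorem sc_valid_general {α 𝕜 : Type*} [Field 𝕜] [LinearOrder 𝕜] [IsStrictOrderedRing 𝕜]
    {P : Set α → 𝕜} (hP : IsCharge P) {B X Y : Set α} {c : 𝕜} (hc : c ≤ 1 / 2)
    (hX : 1 - c ≤ condMass P B X) (hYX : 0 < P ((Y \ X) ∩ B)) :
    c < condMass P B (X ∪ Y) :=
  calc c ≤ 1 - c := by linarith
    _ ≤ condMass P B X := hX
    _ < condMass P B (X ∪ Y) := hP.condMass_lt_condMass_union hYX

namespace EPM

variable {W A : Type} (M : EPM W A)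

theorem isCharge : IsCharge M.P where
  nonneg := M.nonneg
  union_of_disjoint hXY := M.add _ _ hXY.inter_eq

theorem pos_of_mem {v : W} {X : Set W} (hv : v ∈ X) : 0 < M.P X :=
  (M.full v).trans_le (M.isCharge.mono (Set.singleton_subset_iff.mpr hv))

end EPM

/-- Validity of the scheme (SC) for thresholds `c ∈ (0, 1/2] ∩ ℚ`: if `P_w(X) ≥ 1 - c`
and some epistemically possible world is in `Y` but not `X`, then `P_w(X ∪ Y) > c`. -/
theorem sc_valid {W A : Type} (c : ℚ) (hc0 : 0 < c) (hc12 : c ≤ 1/2)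
    (M : EPM W A) (w : W) (X Y : Set W)
    (h1 : 1 - (c : ℝ) ≤ M.Pw w X)
    (h2 : ∃ v ∈ M.cl w, v ∉ X ∧ v ∈ Y) :
    (c : ℝ) < M.Pw w (X ∪ Y) := by
  obtain ⟨v, hv, hvX, hvY⟩ := h2
  have hc : (c : ℝ) ≤ 1 / 2 := by simpa using (Rat.cast_le (K := ℝ)).mpr hc12
  exact sc_valid_general M.isCharge hc h1 (M.pos_of_mem ⟨⟨hvY, hvX⟩, hv⟩)
end

section
/- Let c ∈ (0, 1/2] ∩ ℚ, let M = (W,R,V,P) be an epistemic probability model, let w ∈ W, let m ≥ 1, and let X_1,…,X_m,Y_1,…,Y_m ⊆ W. If for every v ∈ [w] the number of indices i ∈ {1,…,m} with v ∈ X_i is at most the number of indices i with v ∈ Y_i, and P_w(X_1) > c, and P_w(X_i) ≥ 1 − c for all 2 ≤ i ≤ m, then there exists j ∈ {1,…,m} with P_w(Y_j) > c. (This is the validity of the scheme (Scott) for belief with threshold c ≤ 1/2.) -/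
/-!
If every point of `D` lies in at most as many of the `X i` as of the `Y i`, then the sum of the
indicators of the `X i` is at most that of the `Y i` on `D`, and this survives integration against
a finitely additive measure: `∑ P (X i | D) ≤ ∑ P (Y i | D)`. As `c ≤ 1 - c`, each term on the left
is at least `c`, and one of them exceeds `c`; so the `P (Y i | D)` cannot all be at most `c`.
-/

open Classical

open MeasureTheory

section AddContent

variable {Ω ι κ : Type*} {𝒞 : Set (Set Ω)} {D : Set Ω}

theorem isSetRing_univ : IsSetRing (Set.univ : Set (Set Ω)) where
  empty_mem := Set.mem_univ _
  union_mem _ _ _ _ := Set.mem_univ _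
  sdiff_mem _ _ _ _ := Set.mem_univ _

theorem natCast_card_filter_mem {S : Type*} [AddCommMonoidWithOne S] [Fintype ι]
    (Z : ι → Set Ω) (v : Ω) :
    ((Finset.univ.filter (fun i => v ∈ Z i)).card : S) = ∑ i, (Z i).indicator 1 v := by
  simp [Set.indicator_apply]

theorem addContent_eq_inter_add_sdiff {G : Type*} [AddCommMonoid G] (h𝒞 : IsSetRing 𝒞)
    (μ : AddContent G 𝒞) {A B : Set Ω} (hA : A ∈ 𝒞) (hB : B ∈ 𝒞) :
    μ A = μ (A ∩ B) + μ (A \ B) := by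
  rw [← addContent_union h𝒞 (h𝒞.inter_mem hA hB) (h𝒞.sdiff_mem hA hB) Set.disjoint_sdiff_inter.symm,
    Set.inter_union_sdiff]

variable {R : Type*} [Ring R] [PartialOrder R] [IsOrderedRing R]

theorem add_sum_mul_addContent_inter_nonneg (h𝒞 : IsSetRing 𝒞) (μ : AddContent R 𝒞)
    (hμ : ∀ A ∈ 𝒞, 0 ≤ μ A) (s : Finset ι) (a : ι → R) (Z : ι → Set Ω)
    (hZ : ∀ i ∈ s, Z i ∈ 𝒞) (hD : D ∈ 𝒞) (b : R)
    (h : ∀ v ∈ D, 0 ≤ b + ∑ i ∈ s, a i * (Z i).indicator 1 v) :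
    0 ≤ b * μ D + ∑ i ∈ s, a i * μ (D ∩ Z i) := by
  -- Splitting `D` along one `Z i` turns the term `a i` into part of the constant `b`.
  induction s using Finset.induction_on generalizing D b with
  | empty =>
    rcases D.eq_empty_or_nonempty with rfl | ⟨v, hv⟩
    · simp
    · simpa using mul_nonneg (by simpa using h v hv) (hμ D hD)
  | insert i s hi ih =>
    rw [Finset.forall_mem_insert] at hZ
    obtain ⟨hZi, hZs⟩ := hZ
    have inside : 0 ≤ (b + a i) * μ (D ∩ Z i) + ∑ j ∈ s, a j * μ (D ∩ Z i ∩ Z j) :=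
      ih hZs (h𝒞.inter_mem hD hZi) _ fun v hv => by
        simpa [Finset.sum_insert hi, hv.2, add_assoc] using h v hv.1
    have outside : 0 ≤ b * μ (D \ Z i) + ∑ j ∈ s, a j * μ (D \ Z i ∩ Z j) :=
      ih hZs (h𝒞.sdiff_mem hD hZi) _ fun v hv => by
        simpa [Finset.sum_insert hi, hv.2] using h v hv.1
    have split (j : ι) (hj : j ∈ s) :
        a j * μ (D ∩ Z j) = a j * μ (D ∩ Z i ∩ Z j) + a j * μ (D \ Z i ∩ Z j) := by
      rw [addContent_eq_inter_add_sdiff h𝒞 μ (h𝒞.inter_mem hD (hZs j hj)) hZi, mul_add,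
        Set.inter_right_comm, Set.inter_sdiff_right_comm]
    rw [Finset.sum_insert hi, Finset.sum_congr rfl split, Finset.sum_add_distrib,
      addContent_eq_inter_add_sdiff h𝒞 μ hD hZi]
    convert add_nonneg inside outside using 1
    noncomm_ring

theorem sum_addContent_inter_le_of_card_le [Fintype ι] [Fintype κ] (h𝒞 : IsSetRing 𝒞)
    (μ : AddContent R 𝒞) (hμ : ∀ A ∈ 𝒞, 0 ≤ μ A) {X : ι → Set Ω} {Y : κ → Set Ω}
    (hX : ∀ i, X i ∈ 𝒞) (hY : ∀ j, Y j ∈ 𝒞) (hD : D ∈ 𝒞)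
    (hcount : ∀ v ∈ D, (Finset.univ.filter (fun i => v ∈ X i)).card ≤
      (Finset.univ.filter (fun j => v ∈ Y j)).card) :
    ∑ i, μ (X i ∩ D) ≤ ∑ j, μ (Y j ∩ D) := by
  have hweights (v : Ω) (hv : v ∈ D) : 0 ≤ (0 : R) +
      ∑ k, Sum.elim (fun _ => -1) (fun _ => 1) k * (Sum.elim X Y k).indicator 1 v := by
    have hcast := Nat.mono_cast (α := R) (hcount v hv)
    rw [natCast_card_filter_mem, natCast_card_filter_mem] at hcast
    simpa [neg_add_eq_sub] using hcast
  have hdiff := add_sum_mul_addContent_inter_nonneg h𝒞 μ hμ Finset.univ _ (Sum.elim X Y)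
    (fun k _ => by cases k <;> simp [hX, hY]) hD 0 hweights
  simpa [Fintype.sum_sum_type, neg_add_eq_sub, Set.inter_comm D] using hdiff

theorem scott_scheme_valid_general [Fintype ι] (h𝒞 : IsSetRing 𝒞) (μ : AddContent ℝ 𝒞)
    (hμ : ∀ A ∈ 𝒞, 0 ≤ μ A) {c : ℝ} (hc : c ≤ 1 / 2) (hD : D ∈ 𝒞) (hD0 : 0 < μ D)
    {X Y : ι → Set Ω} (hX : ∀ i, X i ∈ 𝒞) (hY : ∀ i, Y i ∈ 𝒞)
    (hcount : ∀ v ∈ D, (Finset.univ.filter (fun i => v ∈ X i)).card ≤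
      (Finset.univ.filter (fun i => v ∈ Y i)).card)
    (i₀ : ι) (hX₀ : c < μ (X i₀ ∩ D) / μ D) (hXi : ∀ i, i ≠ i₀ → 1 - c ≤ μ (X i ∩ D) / μ D) :
    ∃ j, c < μ (Y j ∩ D) / μ D := by
  have hXc (i : ι) : c ≤ μ (X i ∩ D) / μ D := by
    rcases eq_or_ne i i₀ with rfl | hi
    · exact hX₀.le
    · linarith [hXi i hi]
  have hlt : ∑ _i : ι, c < ∑ j, μ (Y j ∩ D) / μ D := calc
    ∑ _i : ι, c < ∑ i, μ (X i ∩ D) / μ D :=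
      Finset.sum_lt_sum (fun i _ => hXc i) ⟨i₀, Finset.mem_univ _, hX₀⟩
    _ = (∑ i, μ (X i ∩ D)) / μ D := (Finset.sum_div ..).symm
    _ ≤ (∑ j, μ (Y j ∩ D)) / μ D :=
      div_le_div_of_nonneg_right (sum_addContent_inter_le_of_card_le h𝒞 μ hμ hX hY hD hcount) hD0.le
    _ = ∑ j, μ (Y j ∩ D) / μ D := Finset.sum_div ..
  obtain ⟨j, -, hj⟩ := Finset.exists_lt_of_sum_lt hlt
  exact ⟨j, hj⟩

end AddContent

namespace EPM

variable {W A : Type} (M : EPM W A)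

theorem P_empty : M.P ∅ = 0 := by
  simpa using M.add ∅ ∅ (Set.inter_empty ∅)

/-- The probability measure of an epistemic probability model as a Mathlib content on the ring of
all sets of worlds. -/
noncomputable def content : AddContent ℝ (Set.univ : Set (Set W)) :=
  isSetRing_univ.addContent_of_union M.P M.P_empty
    fun _ _ hdisj => M.add _ _ hdisj.inter_eq

theorem P_pos_of_mem {X : Set W} {v : W} (hv : v ∈ X) : 0 < M.P X := by
  have hsplit := M.add {v} (X \ {v}) Set.disjoint_sdiff_right.inter_eq
  rw [Set.union_sdiff_cancel (Set.singleton_subset_iff.2 hv)] at hsplit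
  linarith [M.full v, M.nonneg (X \ {v})]

theorem mem_cl_self (w : W) : w ∈ M.cl w :=
  M.equiv.refl w

end EPM

/-- Validity of the scheme (Scott) for thresholds `c ∈ (0, 1/2] ∩ ℚ`. -/
theorem scott_scheme_valid {W A : Type} (c : ℚ) (hc0 : 0 < c) (hc12 : c ≤ 1/2)
    (M : EPM W A) (w : W) (m : ℕ) (hm : 1 ≤ m)
    (X Y : Fin m → Set W)
    (hcount : ∀ v ∈ M.cl w,
      (Finset.univ.filter (fun i => v ∈ X i)).card ≤
      (Finset.univ.filter (fun i => v ∈ Y i)).card)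
    (hX1 : (c : ℝ) < M.Pw w (X ⟨0, hm⟩))
    (hXi : ∀ i : Fin m, i ≠ ⟨0, hm⟩ → 1 - (c : ℝ) ≤ M.Pw w (X i)) :
    ∃ j : Fin m, (c : ℝ) < M.Pw w (Y j) := by
  have hc : (c : ℝ) ≤ 1 / 2 := by simpa using Rat.cast_le (K := ℝ).2 hc12
  exact scott_scheme_valid_general isSetRing_univ M.content (fun X _ => M.nonneg X) hc
    (Set.mem_univ _) (M.P_pos_of_mem (M.mem_cl_self w)) (fun _ => Set.mem_univ _)
    (fun _ => Set.mem_univ _) hcount ⟨0, hm⟩ hX1 hXi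
end

section
/- Let W be a finite nonempty set, let P be a finitely additive probability measure on 𝒫(W), let m ≥ 1, and let X_1,…,X_m,Y_1,…,Y_m ⊆ W. If for every v ∈ W the number of indices i ∈ {1,…,m} with v ∈ X_i is at most the number of indices i with v ∈ Y_i (equivalently, ∑_{i=1}^m ι(X_i) ≤ ∑_{i=1}^m ι(Y_i) pointwise, where ι denotes characteristic functions), then ∑_{i=1}^m P(X_i) ≤ ∑_{i=1}^m P(Y_i). -/
open Classical

/-!
The sets of a finite family cut the ground set into atoms, one for each set `b` of indices: the
points lying in exactly the members indexed by `b`. By finite additivity, a sum of contents of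
members equals the sum over the atoms of their contents, each weighted by the number of members
containing it. Cutting along both families at once, the counting hypothesis compares the two
weights on every nonempty atom.
-/

open Finset MeasureTheory

section Atom

variable {α ι : Type*}

/-- The atom with index set `b` of the family `Z`: the set of points lying in `Z i` exactly for
the `i ∈ b`. Atoms are the cells of the common refinement of the `Z i` and may be empty. The atom
of `∅` is the complement of `⋃ i, Z i` and may lie outside a ring of sets containing the `Z i`. -/
def atom (Z : ι → Set α) (b : Finset ι) : Set α :=
  {v | ∀ i, v ∈ Z i ↔ i ∈ b}

theorem mem_atom {Z : ι → Set α} {b : Finset ι} {v : α} :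
    v ∈ atom Z b ↔ ∀ i, v ∈ Z i ↔ i ∈ b :=
  Iff.rfl

theorem pairwise_disjoint_atom (Z : ι → Set α) : Pairwise (Function.onFun Disjoint (atom Z)) := by
  intro b c hbc
  refine Set.disjoint_left.mpr fun v hb hc => hbc ?_
  ext i
  rw [← mem_atom.mp hb i, mem_atom.mp hc i]

theorem biUnion_atom_eq [Fintype ι] [DecidableEq ι] (Z : ι → Set α) (i : ι) :
    ⋃ b ∈ ({b | i ∈ b} : Finset (Finset ι)), atom Z b = Z i := by
  ext v
  simp only [mem_filter_univ, Set.mem_iUnion, exists_prop]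
  constructor
  · rintro ⟨b, hib, hv⟩
    exact (hv i).mpr hib
  · intro hv
    exact ⟨({j | v ∈ Z j} : Finset ι), by simpa only [mem_filter_univ] using hv,
      fun j => by rw [mem_filter_univ]⟩

theorem atom_eq_biInter_sdiff_biUnion [Fintype ι] [DecidableEq ι] (Z : ι → Set α)
    (b : Finset ι) : atom Z b = (⋂ i ∈ b, Z i) \ ⋃ i ∈ bᶜ, Z i := by
  ext v
  simp only [mem_atom, Set.mem_sdiff, Set.mem_iInter, Set.mem_iUnion, mem_compl, exists_prop,
    not_exists, not_and]
  constructor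
  · intro hv
    exact ⟨fun i hi => (hv i).mpr hi, fun i hi hvi => hi ((hv i).mp hvi)⟩
  · rintro ⟨hmem, hnotMem⟩ i
    exact ⟨fun hvi => by_contra fun hi => hnotMem i hi hvi, hmem i⟩

theorem atom_mem_of_nonempty [Finite ι] {C : Set (Set α)} (hC : IsSetRing C) {Z : ι → Set α}
    (hZ : ∀ i, Z i ∈ C) {b : Finset ι} (hb : b.Nonempty) : atom Z b ∈ C := by
  cases nonempty_fintype ι
  rw [atom_eq_biInter_sdiff_biUnion]
  exact hC.sdiff_mem (hC.biInter_mem b hb fun i _ => hZ i) (hC.biUnion_mem bᶜ fun i _ => hZ i)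

end Atom

section Content

variable {α ι κ M : Type*} [Fintype ι] [Fintype κ] [AddCommMonoid M] {C : Set (Set α)}

theorem addContent_eq_sum_atom [DecidableEq ι] (hC : IsSetRing C) (m : AddContent M C)
    {Z : ι → Set α} (hZ : ∀ i, Z i ∈ C) (i : ι) : m (Z i) = ∑ b with i ∈ b, m (atom Z b) :=
  calc m (Z i)
      = m (⋃ b ∈ ({b | i ∈ b} : Finset (Finset ι)), atom Z b) := by rw [biUnion_atom_eq]
    _ = ∑ b with i ∈ b, m (atom Z b) :=
        addContent_biUnion_eq hC
          (fun b hb => atom_mem_of_nonempty hC hZ ⟨i, (mem_filter_univ b).mp hb⟩)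
          ((pairwise_disjoint_atom Z).set_pairwise _)

theorem sum_addContent_comp_eq_sum_card_nsmul_atom [DecidableEq ι] (hC : IsSetRing C)
    (m : AddContent M C) {Z : ι → Set α} (hZ : ∀ i, Z i ∈ C) (e : κ → ι) :
    ∑ k, m (Z (e k)) = ∑ b, #{k | e k ∈ b} • m (atom Z b) :=
  calc ∑ k, m (Z (e k))
      = ∑ k, ∑ b with e k ∈ b, m (atom Z b) :=
        sum_congr rfl fun k _ => addContent_eq_sum_atom hC m hZ (e k)
    _ = ∑ b, ∑ k with e k ∈ b, m (atom Z b) :=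
        sum_sum_bipartiteAbove_eq_sum_sum_bipartiteBelow (fun k b => e k ∈ b) _
    _ = ∑ b, #{k | e k ∈ b} • m (atom Z b) :=
        sum_congr rfl fun _ _ => sum_const _

theorem sum_prob_mono_general [PartialOrder M] [IsOrderedAddMonoid M] (hC : IsSetRing C)
    (m : AddContent M C) (hnn : ∀ s ∈ C, 0 ≤ m s) {X : ι → Set α} {Y : κ → Set α}
    (hX : ∀ i, X i ∈ C) (hY : ∀ j, Y j ∈ C) (hcount : ∀ v, #{i | v ∈ X i} ≤ #{j | v ∈ Y j}) :
    ∑ i, m (X i) ≤ ∑ j, m (Y j) := by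
  let Z : ι ⊕ κ → Set α := Sum.elim X Y
  have hZ : ∀ k, Z k ∈ C := Sum.rec hX hY
  have hatom (b : Finset (ι ⊕ κ)) : #{i | Sum.inl i ∈ b} • m (atom Z b) ≤
      #{j | Sum.inr j ∈ b} • m (atom Z b) := by
    obtain rfl | hb := b.eq_empty_or_nonempty
    · simp
    obtain hempty | ⟨v, hv⟩ := (atom Z b).eq_empty_or_nonempty
    · simp [hempty]
    refine nsmul_le_nsmul_left (hnn _ (atom_mem_of_nonempty hC hZ hb)) ?_
    simpa only [← mem_atom.mp hv, Z, Sum.elim_inl, Sum.elim_inr] using hcount v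
  calc ∑ i, m (X i)
      = ∑ b, #{i | Sum.inl i ∈ b} • m (atom Z b) :=
        sum_addContent_comp_eq_sum_card_nsmul_atom hC m hZ Sum.inl
    _ ≤ ∑ b, #{j | Sum.inr j ∈ b} • m (atom Z b) := sum_le_sum fun b _ => hatom b
    _ = ∑ j, m (Y j) := (sum_addContent_comp_eq_sum_card_nsmul_atom hC m hZ Sum.inr).symm

end Content

theorem isSetRing_univ_s7 {α : Type*} : IsSetRing (Set.univ : Set (Set α)) :=
  ⟨trivial, fun _ _ _ _ => trivial, fun _ _ _ _ => trivial⟩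

theorem exists_addContent_univ_coe_eq {α M : Type*} [AddCommMonoid M] [IsLeftCancelAdd M]
    {P : Set α → M} (hadd : ∀ X Y : Set α, X ∩ Y = ∅ → P (X ∪ Y) = P X + P Y) :
    ∃ m : AddContent M (Set.univ : Set (Set α)), ⇑m = P := by
  have hP_empty : P ∅ = 0 := by simpa using hadd ∅ ∅ (Set.inter_self ∅)
  exact ⟨isSetRing_univ_s7.addContent_of_union P hP_empty
    fun _ _ hdisj => hadd _ _ hdisj.inter_eq, rfl⟩

/-- If every world belongs to at least as many of the `Y i` as of the `X i`, then
`∑ P(X i) ≤ ∑ P(Y i)` for any finitely additive probability measure `P`. -/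
theorem sum_prob_mono {W : Type} [Finite W] [Nonempty W]
    (P : Set W → ℝ)
    (hnn : ∀ X : Set W, 0 ≤ P X) (hle : ∀ X : Set W, P X ≤ 1)
    (hP1 : P Set.univ = 1)
    (hadd : ∀ X Y : Set W, X ∩ Y = ∅ → P (X ∪ Y) = P X + P Y)
    (m : ℕ) (hm : 1 ≤ m) (X Y : Fin m → Set W)
    (hcount : ∀ v : W,
      (Finset.univ.filter (fun i => v ∈ X i)).card ≤
      (Finset.univ.filter (fun i => v ∈ Y i)).card) :
    ∑ i, P (X i) ≤ ∑ i, P (Y i) := by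
  obtain ⟨μ, rfl⟩ := exists_addContent_univ_coe_eq hadd
  exact sum_prob_mono_general isSetRing_univ_s7 μ (fun s _ => hnn s) (fun _ => trivial)
    (fun _ => trivial) hcount
end

section
/- Let W = {a,b,c,d,e,f,g} be a 7-element set, and define 𝒳 = {efg, abg, adf, bde, ace, cdg, bcf} and 𝒴 = {abcd, cdef, bceg, acfg, bdfg, abef, adeg} (writing xyz for {x,y,z} and wxyz for {w,x,y,z}). Then for every c ∈ (0,1) there is no finitely additive probability measure P on 𝒫(W) such that P(X) > c for every X ∈ 𝒳 and P(Y) ≤ c for every Y ∈ 𝒴. Consequently, the epistemic neighborhood model with world set W, R = W × W, V(w) = {w}, and N(w) = 𝒩 := {X' : ∃X ∈ 𝒳 with X ⊆ X' ⊆ W} for every w has no agreeing probability measure for any threshold c ∈ (0,1) ∩ ℚ. -/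
open Classical

/-- An epistemic neighborhood model. -/
structure ENM (W A : Type) where
  finite : Finite W
  nonempty : Nonempty W
  R : W → W → Prop
  equiv : Equivalence R
  V : W → Set A
  N : W → Set (Set W)
  kbc : ∀ w : W, ∀ X ∈ N w, X ⊆ {v | R w v}
  kbf : ∀ w : W, ∅ ∉ N w
  contains_class : ∀ w : W, {v | R w v} ∈ N w
  agreeN : ∀ w v : W, R w v → N v = N w
  kbm : ∀ w : W, ∀ X ∈ N w, ∀ Y : Set W, X ⊆ Y → Y ⊆ {v | R w v} → Y ∈ N w

/-- The equivalence class `[w]` of a world. -/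
def ENM.cl {W A : Type} (M : ENM W A) (w : W) : Set W := {v | M.R w v}

/-- The worlds `a,…,g` are `0,…,6 : Fin 7`.  The family `𝒳`. -/
def calX : Set (Set (Fin 7)) :=
  {{4, 5, 6}, {0, 1, 6}, {0, 3, 5}, {1, 3, 4}, {0, 2, 4}, {2, 3, 6}, {1, 2, 5}}

/-- The family `𝒴`. -/
def calY : Set (Set (Fin 7)) :=
  {{0, 1, 2, 3}, {2, 3, 4, 5}, {1, 2, 4, 6}, {0, 2, 5, 6}, {1, 3, 5, 6},
   {0, 1, 4, 5}, {0, 3, 4, 6}}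

/-!
The family `𝒳` consists of the lines of a Fano plane and `𝒴` of their complements. If a threshold
separated the two families, every line would be more probable than its complement, that is, have
probability above `1 / 2`, so the seven lines would have total probability above `7 / 2`. But each
point lies on exactly three lines, so the total is `3`. The model inherits the obstruction because
any two lines meet: no line is contained in the complement of a line, so no member of `𝒴` is a
neighborhood.
-/

/-- Finite additivity of a set function. Positivity and normalization are not part of the notion,
so that it covers signed and unnormalized charges. -/
def IsFinitelyAdditive {α M : Type*} [Add M] (P : Set α → M) : Prop :=
  ∀ X Y : Set α, X ∩ Y = ∅ → P (X ∪ Y) = P X + P Y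

namespace IsFinitelyAdditive

open scoped Finset

variable {α ι : Type*}

theorem apply_empty {M : Type*} [AddMonoid M] [IsLeftCancelAdd M] {P : Set α → M}
    (hP : IsFinitelyAdditive P) : P ∅ = 0 := by
  have h : P ∅ = P ∅ + P ∅ := by simpa using hP ∅ ∅ (Set.inter_self ∅)
  exact left_eq_add.mp h

theorem apply_add_apply_compl {M : Type*} [Add M] {P : Set α → M}
    (hP : IsFinitelyAdditive P) (X : Set α) : P X + P Xᶜ = P Set.univ := by
  rw [← hP X Xᶜ (Set.inter_compl_self X), Set.union_compl_self]

section Sum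

variable {M : Type*} [AddCommMonoid M] [IsLeftCancelAdd M] {P : Set α → M}

theorem apply_coe_finset (hP : IsFinitelyAdditive P) (s : Finset α) :
    P s = ∑ x ∈ s, P {x} := by
  induction s using Finset.cons_induction with
  | empty => simpa using hP.apply_empty
  | cons a s ha ih =>
    rw [Finset.coe_cons, Set.insert_eq, hP _ _ (by simpa using ha), ih, Finset.sum_cons]

theorem sum_eq_nsmul_apply_univ [Finite α] [DecidableEq α] (hP : IsFinitelyAdditive P)
    {s : Finset ι} {X : ι → Finset α} {k : ℕ} (hk : ∀ x, #{i ∈ s | x ∈ X i} = k) :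
    ∑ i ∈ s, P (X i) = k • P Set.univ := by
  have := Fintype.ofFinite α
  calc ∑ i ∈ s, P (X i) = ∑ i ∈ s, ∑ x ∈ X i, P {x} := by simp only [hP.apply_coe_finset]
    _ = ∑ x, ∑ i ∈ s with x ∈ X i, P {x} := Finset.sum_comm' (by simp)
    _ = ∑ x, k • P {x} := by simp only [Finset.sum_const, hk]
    _ = k • P Set.univ := by
      rw [← Finset.smul_sum, ← hP.apply_coe_finset, Finset.coe_univ]

end Sum

theorem card_nsmul_lt_of_compl_lt {G : Type*} [AddCommGroup G] [PartialOrder G]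
    [IsOrderedAddMonoid G] {P : Set α → G} [Finite α] [DecidableEq α]
    (hP : IsFinitelyAdditive P) {s : Finset ι} (hs : s.Nonempty) {X : ι → Finset α} {k : ℕ}
    (hk : ∀ x, #{i ∈ s | x ∈ X i} = k) (hX : ∀ i ∈ s, P (X i : Set α)ᶜ < P (X i)) :
    #s • P Set.univ < (2 * k) • P Set.univ := by
  calc #s • P Set.univ = ∑ i ∈ s, (P (X i) + P (X i : Set α)ᶜ) := by
        simp only [hP.apply_add_apply_compl, Finset.sum_const]
    _ < ∑ i ∈ s, (P (X i) + P (X i)) :=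
        Finset.sum_lt_sum_of_nonempty hs fun i hi => by gcongr; exact hX i hi
    _ = (2 * k) • P Set.univ := by
        rw [Finset.sum_add_distrib, hP.sum_eq_nsmul_apply_univ hk, two_mul, add_nsmul]

end IsFinitelyAdditive

/-- The lines of the Fano plane on `Fin 7`, numbered in the order in which `calX` lists them. They
are finsets so that incidence can be decided. -/
def fanoLine : Fin 7 → Finset (Fin 7) :=
  ![{4, 5, 6}, {0, 1, 6}, {0, 3, 5}, {1, 3, 4}, {0, 2, 4}, {2, 3, 6}, {1, 2, 5}]

open scoped Finset in
theorem card_filter_mem_fanoLine (x : Fin 7) : #{i | x ∈ fanoLine i} = 3 := by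
  decide +revert

theorem not_disjoint_fanoLine (i j : Fin 7) : ¬ Disjoint (fanoLine i) (fanoLine j) := by
  decide +revert

theorem calX_eq_range_fanoLine : calX = Set.range fun i => (fanoLine i : Set (Fin 7)) := by
  ext X
  simp [calX, fanoLine, Fin.exists_fin_succ, eq_comm]

theorem calY_eq_range_compl_fanoLine :
    calY = Set.range fun i => (fanoLine i : Set (Fin 7))ᶜ := by
  have hcompl (i : Fin 7) : (fanoLine i)ᶜ =
      ![{0, 1, 2, 3}, {2, 3, 4, 5}, {1, 2, 4, 6}, {0, 2, 5, 6}, {1, 3, 5, 6}, {0, 1, 4, 5},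
        {0, 3, 4, 6}] i := by
    decide +revert
  ext Y
  simp only [← Finset.coe_compl, hcompl]
  simp [calY, Fin.exists_fin_succ, eq_comm]

theorem not_subset_of_mem_calX_of_mem_calY {X Y : Set (Fin 7)} (hX : X ∈ calX) (hY : Y ∈ calY) :
    ¬ X ⊆ Y := by
  rw [calX_eq_range_fanoLine] at hX
  rw [calY_eq_range_compl_fanoLine] at hY
  obtain ⟨i, rfl⟩ := hX
  obtain ⟨j, rfl⟩ := hY
  rw [Set.subset_compl_iff_disjoint_right, Finset.disjoint_coe]
  exact not_disjoint_fanoLine i j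

theorem IsFinitelyAdditive.not_calX_gt_and_calY_le {G : Type*} [AddCommGroup G] [PartialOrder G]
    [IsOrderedAddMonoid G] {P : Set (Fin 7) → G} (hP : IsFinitelyAdditive P)
    (huniv : 0 ≤ P Set.univ) (c : G) :
    ¬ ((∀ X ∈ calX, c < P X) ∧ ∀ Y ∈ calY, P Y ≤ c) := by
  rw [calX_eq_range_fanoLine, calY_eq_range_compl_fanoLine, Set.forall_mem_range,
    Set.forall_mem_range]
  rintro ⟨hX, hY⟩
  have hlt : 7 • P Set.univ < (2 * 3) • P Set.univ :=
    hP.card_nsmul_lt_of_compl_lt Finset.univ_nonempty card_filter_mem_fanoLine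
      fun i _ => (hY i).trans_lt (hX i)
  exact hlt.not_ge (nsmul_le_nsmul_left huniv (by norm_num))

theorem walley_fine_general {K : Type*} [Field K] [LinearOrder K] [IsStrictOrderedRing K]
    {P : Set (Fin 7) → K} (hP : IsFinitelyAdditive P) (huniv : P Set.univ = 1) (c : K) :
    ¬ ((∀ X ∈ calX, c < P X) ∧ ∀ Y ∈ calY, P Y ≤ c) ∧
    ∀ {A : Type} (M : ENM (Fin 7) A),
      M.R = (fun _ _ => True) →
      M.N = (fun _ => {X' : Set (Fin 7) | ∃ X ∈ calX, X ⊆ X'}) →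
      ¬ ∀ (w : Fin 7) (X : Set (Fin 7)), X ⊆ M.cl w →
        (X ∈ M.N w ↔ c < P (X ∩ M.cl w) / P (M.cl w)) := by
  have hsep := hP.not_calX_gt_and_calY_le (huniv.symm ▸ zero_le_one) c
  refine ⟨hsep, fun M hR hN hagree => hsep ?_⟩
  have hcl : M.cl 0 = Set.univ := by simp [ENM.cl, hR]
  have hmem (X : Set (Fin 7)) : (∃ Z ∈ calX, Z ⊆ X) ↔ c < P X := by
    simpa [hcl, hN, huniv] using hagree 0 X
  refine ⟨fun X hX => (hmem X).mp ⟨X, hX, subset_rfl⟩, fun Y hY => not_lt.mp fun hlt => ?_⟩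
  obtain ⟨X, hX, hXY⟩ := (hmem Y).mpr hlt
  exact not_subset_of_mem_calX_of_mem_calY hX hY hXY

/-- Walley–Fine: no finitely additive probability measure on `𝒫(W)` gives every member
of `𝒳` probability `> c` and every member of `𝒴` probability `≤ c`; consequently the
epistemic neighborhood model with `R = W × W`, `V w = {w}` and `N w = 𝒩` has no
agreeing probability measure for any threshold `c ∈ (0,1) ∩ ℚ`. -/
theorem walley_fine :
    (∀ c : ℝ, c ∈ Set.Ioo (0 : ℝ) 1 →
      ¬ ∃ P : Set (Fin 7) → ℝ,
        (∀ X : Set (Fin 7), 0 ≤ P X) ∧ (∀ X : Set (Fin 7), P X ≤ 1) ∧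
        P Set.univ = 1 ∧
        (∀ X Y : Set (Fin 7), X ∩ Y = ∅ → P (X ∪ Y) = P X + P Y) ∧
        (∀ X ∈ calX, c < P X) ∧ (∀ Y ∈ calY, P Y ≤ c)) ∧
    (∀ c : ℚ, 0 < c → c < 1 →
      ∀ M : ENM (Fin 7) (Fin 7),
        M.R = (fun _ _ => True) →
        M.V = (fun w => {w}) →
        M.N = (fun _ => {X' : Set (Fin 7) | ∃ X ∈ calX, X ⊆ X'}) →
        ¬ ∃ P : Set (Fin 7) → ℝ,
          (∀ X : Set (Fin 7), 0 ≤ P X) ∧ (∀ X : Set (Fin 7), P X ≤ 1) ∧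
          P Set.univ = 1 ∧
          (∀ X Y : Set (Fin 7), X ∩ Y = ∅ → P (X ∪ Y) = P X + P Y) ∧
          (∀ w : Fin 7, 0 < P {w}) ∧
          (∀ (w : Fin 7) (X : Set (Fin 7)), X ⊆ M.cl w →
            (X ∈ M.N w ↔ (c : ℝ) < P (X ∩ M.cl w) / P (M.cl w)))) :=
  ⟨fun c _ ⟨_, _, _, huniv, hP, hsep⟩ => (walley_fine_general hP huniv c).1 hsep,
    fun c _ _ M hR _ hN ⟨_, _, _, huniv, hP, _, hagree⟩ =>
      (walley_fine_general hP huniv (c : ℝ)).2 M hR hN hagree⟩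
end

section
/- Let M = (W,R,V,N) be a mid-threshold epistemic neighborhood model. Then there exists a finitely additive probability measure P : 𝒫(W) → [0,1] with full support (P({w}) > 0 for every w ∈ W) such that for every w ∈ W and every X ⊆ [w]: X ∈ N(w) if and only if P_w(X) := P(X ∩ [w]) / P([w]) > 1/2. That is, every mid-threshold epistemic neighborhood model has an agreeing probability measure for threshold 1/2. -/
open Classical

/-- A mid-threshold epistemic neighborhood model: an epistemic neighborhood model
additionally satisfying (d), (sc) and (scott). -/
structure MidENM (W A : Type) extends ENM W A where
  d : ∀ w : W, ∀ X ∈ N w, {v | R w v} \ X ∉ N w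
  sc : ∀ w : W, ∀ X Y : Set W, X ⊆ {v | R w v} → Y ⊆ {v | R w v} →
      {v | R w v} \ X ∉ N w → X ⊂ Y → Y ∈ N w
  scott : ∀ w : W, ∀ m : ℕ, ∀ X Y : Fin (m + 1) → Set W,
      (∀ i, X i ⊆ {v | R w v}) → (∀ i, Y i ⊆ {v | R w v}) →
      (∀ v : W, (Finset.univ.filter (fun i => v ∈ X i)).card ≤
                (Finset.univ.filter (fun i => v ∈ Y i)).card) →
      X 0 ∈ N w →
      (∀ i : Fin (m + 1), i ≠ 0 → {v | R w v} \ X i ∉ N w) →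
      ∃ j : Fin (m + 1), Y j ∈ N w

/-!
Fix a class `[w]` and encode `X ⊆ [w]` by its `±1` vector. Weights `p` on `[w]` agree with `N w` if
they are positive on the unit vectors, nonnegative on every `X` whose complement is not in `N w`,
and positive on every `X ∈ N w`. By Farkas' lemma over `ℚ` such weights exist unless some nontrivial
nonnegative rational relation among these vectors involves one of the strict constraints. Clearing
denominators turns the relation into a finite family of sets; pitted against the family of
complements, Scott's axiom excludes every member of `N w` from it. If a unit vector at `u` occurs,
take two copies of the family and add `u` to one set of one copy: the signed sums stay nonpositive,
but now (sc) puts a member of `N w` into the family. The weights found on the individual classes are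
glued and normalised, since agreement is invariant under rescaling each class.
-/

section Farkas

open Module Submodule

variable {𝕜 E ι : Type*} [Field 𝕜] [LinearOrder 𝕜] [IsStrictOrderedRing 𝕜]
  [AddCommGroup E] [Module 𝕜 E]

theorem nonneg_apply_of_mem_hull {s : Set (Dual 𝕜 E)} {x : E} (hx : ∀ f ∈ s, 0 ≤ f x)
    {f : Dual 𝕜 E} (hf : f ∈ PointedCone.hull 𝕜 s) : 0 ≤ f x := by
  have hs : PointedCone.hull 𝕜 s ≤ (PointedCone.positive 𝕜 𝕜).comap (LinearMap.applyₗ x) :=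
    span_le.2 hx
  exact hs hf

theorem mem_hull_insert_of_mem_map_transvection {s : Set (Dual 𝕜 E)} {f b : Dual 𝕜 E} {x₀ : E}
    (hs : ∀ g ∈ s, 0 ≤ g x₀) (hb : b x₀ ≤ 0)
    (h : b + b x₀ • f ∈ (PointedCone.hull 𝕜 s).map (LinearMap.transvection (Dual.eval 𝕜 E x₀) f)) :
    b ∈ PointedCone.hull 𝕜 (insert f s) := by
  obtain ⟨c, hc, hcb⟩ := PointedCone.mem_map.1 h
  have hcb : c + c x₀ • f = b + b x₀ • f := hcb
  have hcoeff : 0 ≤ c x₀ - b x₀ := sub_nonneg.2 (hb.trans (nonneg_apply_of_mem_hull hs hc))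
  refine mem_span_insert.2 ⟨⟨c x₀ - b x₀, hcoeff⟩, c, hc, ?_⟩
  rw [Nonneg.mk_smul, sub_smul]
  exact (eq_sub_of_add_eq hcb.symm).trans (by abel)

theorem exists_nonneg_and_neg_and_apply_eq_neg_one {s : Set (Dual 𝕜 E)} {f b : Dual 𝕜 E} {x : E}
    (h : ∀ x, (∀ g ∈ insert f s, 0 ≤ g x) → 0 ≤ b x) (hs : ∀ g ∈ s, 0 ≤ g x) (hb : b x < 0) :
    ∃ x₀, (∀ g ∈ s, 0 ≤ g x₀) ∧ b x₀ < 0 ∧ f x₀ = -1 := by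
  have hf : f x < 0 := by
    by_contra! hf
    exact hb.not_ge (h x (Set.forall_mem_insert.2 ⟨hf, hs⟩))
  have hpos : 0 < -(f x)⁻¹ := neg_pos.2 (inv_lt_zero.2 hf)
  refine ⟨-(f x)⁻¹ • x, fun g hg => ?_, ?_, ?_⟩
  · simpa only [map_smul] using smul_nonneg hpos.le (hs g hg)
  · simpa only [map_smul] using smul_neg_of_pos_of_neg hpos hb
  · simp [hf.ne]

/-- Farkas' lemma over an ordered field, where separation by compactness is not available. When the
constraint `a n` is needed, some `x₀` with `a n x₀ = -1` violates `b`, and the transvection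
`g ↦ g + g x₀ • a n` pulls functionals back along the projection of `E` onto the kernel of `a n`
along `x₀`, where one constraint fewer remains. -/
theorem mem_hull_image_of_forall_nonneg (s : Finset ι) (a : ι → Dual 𝕜 E) (b : Dual 𝕜 E)
    (h : ∀ x, (∀ i ∈ s, 0 ≤ a i x) → 0 ≤ b x) : b ∈ PointedCone.hull 𝕜 (a '' s) := by
  induction s using Finset.induction_on generalizing a b with
  | empty =>
    have hb : b = 0 := by
      ext x
      have hneg := h (-x) (by simp)
      rw [map_neg, neg_nonneg] at hneg
      exact hneg.antisymm (h x (by simp))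
    exact hb ▸ zero_mem _
  | insert n s _ ih =>
    rw [Finset.coe_insert, Set.image_insert_eq]
    by_cases hb : ∀ x, (∀ i ∈ s, 0 ≤ a i x) → 0 ≤ b x
    · exact span_mono (Set.subset_insert _ _) (ih a b hb)
    push Not at hb
    obtain ⟨x, hx, hbx⟩ := hb
    obtain ⟨x₀, hx₀, hbx₀, hnx₀⟩ :=
      exists_nonneg_and_neg_and_apply_eq_neg_one (s := a '' s) (f := a n) (b := b) (x := x)
        (by simpa using h) (by simpa using hx) hbx
    refine mem_hull_insert_of_mem_map_transvection hx₀ hbx₀.le ?_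
    rw [PointedCone.map, map_span, ← Set.image_comp]
    refine ih _ _ fun y hy => ?_
    have hproj := h (y + a n y • x₀) fun i hi => by
      rcases Finset.mem_insert.1 hi with rfl | hi
      · simp [hnx₀]
      · simpa [mul_comm, LinearMap.transvection.apply] using hy i hi
    simpa [mul_comm] using hproj

theorem exists_forall_nonneg_and_forall_pos [Fintype ι] (a : ι → Dual 𝕜 E) (t : Set ι)
    (h : ∀ l : ι → 𝕜, 0 ≤ l → ∑ i, l i • a i = 0 → ∀ j ∈ t, l j = 0) :
    ∃ x, (∀ i, 0 ≤ a i x) ∧ ∀ j ∈ t, 0 < a j x := by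
  have hpos : ∀ j : t, ∃ x, (∀ i, 0 ≤ a i x) ∧ 0 < a j x := by
    rintro ⟨j, hj⟩
    by_contra! hcon
    have hmem : -a j ∈ PointedCone.hull 𝕜 (a '' (Finset.univ : Finset ι)) :=
      mem_hull_image_of_forall_nonneg _ a _ fun x hx => by
        simpa using hcon x (by simpa using hx)
    rw [Finset.coe_univ, Set.image_univ, mem_span_range_iff_exists_fun] at hmem
    obtain ⟨c, hc⟩ := hmem
    have hrel : ∑ i, ((fun i => (c i : 𝕜)) + Pi.single j 1 : ι → 𝕜) i • a i = 0 := by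
      simp only [Pi.add_apply, add_smul, Finset.sum_add_distrib, Pi.single_apply, ite_smul,
        one_smul, zero_smul, Finset.sum_ite_eq', Finset.mem_univ, if_true]
      exact add_eq_zero_iff_eq_neg.2 hc
    have hzero := h _ (add_nonneg (fun i => (c i).2) (Pi.single_nonneg.2 zero_le_one)) hrel j hj
    rw [Pi.add_apply, Pi.single_eq_same] at hzero
    linarith [(c j).2]
  choose x hx hxpos using hpos
  refine ⟨∑ j, x j, fun i => ?_, fun j hj => ?_⟩
  · rw [map_sum]
    exact Finset.sum_nonneg fun j _ => hx j i
  · rw [map_sum]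
    exact Finset.sum_pos' (fun k _ => hx k j) ⟨⟨j, hj⟩, Finset.mem_univ _, hxpos ⟨j, hj⟩⟩

end Farkas

theorem exists_nat_cast_eq_mul {ι : Type*} [Finite ι] (l : ι → ℚ) (hl : 0 ≤ l) :
    ∃ d : ℕ, 0 < d ∧ ∃ n : ι → ℕ, ∀ i, (n i : ℚ) = d * l i := by
  lift l to ι → ℚ≥0 using hl
  obtain ⟨d, hd⟩ := IsLocalization.exist_integer_multiples_of_finite (nonZeroDivisors ℕ) l
  choose n hn using hd
  refine ⟨d, Nat.pos_of_ne_zero (nonZeroDivisors.ne_zero d.2), n, fun i => ?_⟩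
  simpa using congrArg ((↑) : ℚ≥0 → ℚ) (hn i)

/-- The `±1` indicator of a set: pairing it with weights compares the weight of the set with the
weight of its complement. Integer values let sums over families of sets be read as differences of
cardinalities. -/
noncomputable def signVec {α : Type*} (X : Set α) (v : α) : ℤ := if v ∈ X then 1 else -1

section SignVec

variable {α : Type*}

theorem signVec_insert (X : Set α) {u : α} (hu : u ∉ X) :
    signVec (insert u X) = signVec X + Pi.single u 2 := by
  ext v
  obtain rfl | hv := eq_or_ne v u <;> simp [signVec, *]

theorem sum_signVec_eq_card_sub_card {ι : Type*} [Fintype ι] (X : ι → Set α) (v : α) :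
    ∑ i, signVec (X i) v =
      (Finset.univ.filter (fun i => v ∈ X i)).card -
        (Finset.univ.filter (fun i => v ∈ (X i)ᶜ)).card := by
  simp only [Finset.natCast_card_filter, ← Finset.sum_sub_distrib, signVec]
  refine Finset.sum_congr rfl fun i _ => ?_
  by_cases hv : v ∈ X i <;> simp [hv]

theorem signVec_compl (X : Set α) : signVec Xᶜ = -signVec X := by
  ext v
  by_cases hv : v ∈ X <;> simp [signVec, hv]

theorem sum_signVec_mul {R : Type*} [Ring R] [Fintype α] (X : Set α) (p : α → R) :
    ∑ v, (signVec X v : R) * p v = 2 * ∑ᶠ v ∈ X, p v - ∑ᶠ v, p v := by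
  rw [finsum_mem_def, finsum_eq_sum_of_fintype, finsum_eq_sum_of_fintype, Finset.mul_sum,
    ← Finset.sum_sub_distrib]
  refine Finset.sum_congr rfl fun v _ => ?_
  by_cases hv : v ∈ X
  · simp [signVec, hv, two_mul]
  · simp [signVec, hv]

/-- The axioms (d), (sc) and (scott) of a mid-threshold model on a single class, taken to be a type
so that relative complements in the class become complements. -/
structure IsMidThreshold (𝒩 : Set (Set α)) : Prop where
  compl_notMem : ∀ X ∈ 𝒩, Xᶜ ∉ 𝒩
  mem_of_ssubset : ∀ X Y, Xᶜ ∉ 𝒩 → X ⊂ Y → Y ∈ 𝒩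
  scott : ∀ (m : ℕ) (X Y : Fin (m + 1) → Set α),
    (∀ v, (Finset.univ.filter (fun i => v ∈ X i)).card ≤
      (Finset.univ.filter (fun i => v ∈ Y i)).card) →
    X 0 ∈ 𝒩 → (∀ i ≠ 0, (X i)ᶜ ∉ 𝒩) → ∃ j, Y j ∈ 𝒩

namespace IsMidThreshold

variable {𝒩 : Set (Set α)} (h𝒩 : IsMidThreshold 𝒩)
include h𝒩

theorem notMem_of_sum_signVec_nonpos {ι : Type*} [Fintype ι] {X : ι → Set α}
    (hX : ∀ i, (X i)ᶜ ∉ 𝒩) (hsum : ∀ v, ∑ i, signVec (X i) v ≤ 0) (i : ι) : X i ∉ 𝒩 := by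
  intro hi
  obtain ⟨m, hm⟩ := Nat.exists_eq_succ_of_ne_zero (Fintype.card_pos_iff.2 ⟨i⟩).ne'
  let e₀ : Fin (m + 1) ≃ ι := (Fintype.equivFinOfCardEq hm).symm
  let e : Fin (m + 1) ≃ ι := (Equiv.swap 0 (e₀.symm i)).trans e₀
  have he : e 0 = i := by simp [e]
  obtain ⟨j, hj⟩ := h𝒩.scott m (fun k => X (e k)) (fun k => (X (e k))ᶜ)
    (fun v => by
      have hv := hsum v
      rw [← e.sum_comp, sum_signVec_eq_card_sub_card] at hv
      convert Int.ofNat_le.1 (sub_nonpos.1 hv))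
    (by simpa [he] using hi) (fun k _ => hX (e k))
  exact hX _ hj

theorem sum_signVec_eq_zero {ι : Type*} [Fintype ι] {X : ι → Set α} (hX : ∀ i, (X i)ᶜ ∉ 𝒩)
    (hsum : ∀ v, ∑ i, signVec (X i) v ≤ 0) (u : α) : ∑ i, signVec (X i) u = 0 := by
  by_contra hne
  have hneg : ∑ i, signVec (X i) u < 0 := (hsum u).lt_of_ne hne
  obtain ⟨i, -, hi⟩ := Finset.exists_lt_of_sum_lt (hneg.trans_eq Finset.sum_const_zero.symm)
  have hui : u ∉ X i := fun hu => by simp [signVec, hu] at hi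
  have hmem : insert u (X i) ∈ 𝒩 := h𝒩.mem_of_ssubset _ _ (hX i) (Set.ssubset_insert hui)
  let Y : ι ⊕ ι → Set α := Sum.elim X fun k => if k = i then insert u (X k) else X k
  have hY : ∀ k, (Y k)ᶜ ∉ 𝒩 := by
    rintro (k | k)
    · exact hX k
    · by_cases hk : k = i
      · simpa only [Y, Sum.elim_inr, hk, if_true] using h𝒩.compl_notMem _ hmem
      · simpa only [Y, Sum.elim_inr, hk, if_false] using hX k
  have hYsum : ∀ v, ∑ k, signVec (Y k) v =
      2 * ∑ k, signVec (X k) v + (Pi.single u 2 : α → ℤ) v := by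
    intro v
    have hreplace : ∀ k, signVec (if k = i then insert u (X k) else X k) v =
        signVec (X k) v + if k = i then (Pi.single u 2 : α → ℤ) v else 0 := by
      intro k
      split_ifs with hk
      · rw [hk, signVec_insert _ hui, Pi.add_apply]
      · rw [add_zero]
    simp [Y, hreplace, Finset.sum_add_distrib, two_mul, add_assoc]
  refine h𝒩.notMem_of_sum_signVec_nonpos hY (fun v => ?_) (Sum.inr i) (by simpa [Y] using hmem)
  rw [hYsum]
  obtain rfl | hv := eq_or_ne v u
  · rw [Pi.single_eq_same]
    omega
  · rw [Pi.single_eq_of_ne hv]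
    linarith [hsum v]

theorem eq_zero_of_sum_mul_signVec_nonpos [Fintype α] {l : {X : Set α // Xᶜ ∉ 𝒩} → ℚ}
    (hl : 0 ≤ l) (hsum : ∀ v, ∑ X, l X * signVec X.1 v ≤ 0) :
    (∀ v, ∑ X, l X * signVec X.1 v = 0) ∧ ∀ X, X.1 ∈ 𝒩 → l X = 0 := by
  obtain ⟨d, hd, n, hn⟩ := exists_nat_cast_eq_mul l hl
  have hd' : (0 : ℚ) < d := Nat.cast_pos.2 hd
  let F : (Σ X, Fin (n X)) → Set α := fun k => k.1
  have hF : ∀ k, (F k)ᶜ ∉ 𝒩 := fun k => k.1.2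
  have hFsum : ∀ v, ((∑ k, signVec (F k) v : ℤ) : ℚ) = d * ∑ X, l X * signVec X.1 v := by
    intro v
    simp [F, Fintype.sum_sigma, hn, Finset.mul_sum, mul_assoc]
  have hFnonpos : ∀ v, ∑ k, signVec (F k) v ≤ 0 := fun v => by
    rw [← Int.cast_nonpos (R := ℚ), hFsum]
    exact mul_nonpos_of_nonneg_of_nonpos hd'.le (hsum v)
  refine ⟨fun v => ?_, fun X hX => ?_⟩
  · have hzero := hFsum v
    rw [h𝒩.sum_signVec_eq_zero hF hFnonpos v, Int.cast_zero] at hzero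
    exact (mul_eq_zero.1 hzero.symm).resolve_left hd'.ne'
  · have hnX : n X = 0 := by
      by_contra hne
      exact h𝒩.notMem_of_sum_signVec_nonpos hF hFnonpos ⟨X, 0, Nat.pos_of_ne_zero hne⟩ hX
    have hlX := hn X
    rw [hnX, Nat.cast_zero] at hlX
    exact (mul_eq_zero.1 hlX.symm).resolve_left hd'.ne'

theorem exists_weights_signVec [Fintype α] : ∃ p : α → ℚ, (∀ v, 0 < p v) ∧
    (∀ X, Xᶜ ∉ 𝒩 → 0 ≤ ∑ v, signVec X v * p v) ∧ ∀ X ∈ 𝒩, 0 < ∑ v, signVec X v * p v := by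
  let a : {X : Set α // Xᶜ ∉ 𝒩} ⊕ α → Module.Dual ℚ (α → ℚ) :=
    Sum.elim (fun X => dotProductBilin ℚ ℚ fun v => signVec X.1 v) LinearMap.proj
  obtain ⟨p, hnonneg, hpos⟩ := exists_forall_nonneg_and_forall_pos a
    (Sum.inl '' {X | X.1 ∈ 𝒩} ∪ Set.range Sum.inr) fun l hl hrel => by
      have hcoord : ∀ v, ∑ X, l (Sum.inl X) * signVec X.1 v + l (Sum.inr v) = 0 := fun v => by
        simpa [a, Pi.single_apply] using LinearMap.congr_fun hrel (Pi.single v 1)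
      obtain ⟨hzero, hmaj⟩ := h𝒩.eq_zero_of_sum_mul_signVec_nonpos
        (l := fun X => l (Sum.inl X)) (fun X => hl _)
        fun v => by linarith [hcoord v, show 0 ≤ l (Sum.inr v) from hl _]
      rintro _ (⟨X, hX, rfl⟩ | ⟨v, rfl⟩)
      · exact hmaj X hX
      · linarith [hcoord v, hzero v]
  refine ⟨p, fun v => ?_, fun X hX => ?_, fun X hX => ?_⟩
  · exact hpos (Sum.inr v) (.inr ⟨v, rfl⟩)
  · exact hnonneg (Sum.inl ⟨X, hX⟩)
  · exact hpos (Sum.inl ⟨X, h𝒩.compl_notMem X hX⟩) (.inl ⟨_, hX, rfl⟩)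

theorem exists_weights [Finite α] : ∃ p : α → ℚ, (∀ v, 0 < p v) ∧
    ∀ X, X ∈ 𝒩 ↔ ∑ᶠ v, p v < 2 * ∑ᶠ v ∈ X, p v := by
  cases nonempty_fintype α
  obtain ⟨p, hp, hnonneg, hpos⟩ := h𝒩.exists_weights_signVec
  refine ⟨p, hp, fun X => ⟨fun hX => ?_, fun hX => ?_⟩⟩
  · linarith [hpos X hX, sum_signVec_mul X p]
  · by_contra hX'
    have hcompl := hnonneg Xᶜ (by rwa [compl_compl])
    simp only [signVec_compl, Pi.neg_apply, Int.cast_neg, neg_mul, Finset.sum_neg_distrib] at hcompl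
    linarith [sum_signVec_mul X p]

end IsMidThreshold
end SignVec

/-- The additive set function with point masses proportional to `p`, with total mass `1` when the
sum of `p` is finite and nonzero (it is constantly `0` when that sum is `0`). -/
noncomputable def normalizedMass {𝕜 α : Type*} [Field 𝕜] (p : α → 𝕜) (X : Set α) : 𝕜 :=
  (∑ᶠ v ∈ X, p v) / ∑ᶠ v, p v

section NormalizedMass

theorem finsum_mem_pos_of_forall_pos {α M : Type*} [AddCommMonoid M] [PartialOrder M]
    [IsOrderedCancelAddMonoid M] [Finite α] {p : α → M} (hp : ∀ v, 0 < p v) {X : Set α}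
    (hX : X.Nonempty) : 0 < ∑ᶠ v ∈ X, p v :=
  finsum_cond_pos (fun v _ => (hp v).le) (hX.imp fun v hv => ⟨hv, hp v⟩) (Set.toFinite _)

theorem finsum_pos_of_forall_pos {α M : Type*} [AddCommMonoid M] [PartialOrder M]
    [IsOrderedCancelAddMonoid M] [Finite α] [Nonempty α] {p : α → M} (hp : ∀ v, 0 < p v) :
    0 < ∑ᶠ v, p v := by
  simpa only [finsum_mem_univ] using finsum_mem_pos_of_forall_pos hp Set.univ_nonempty

variable {𝕜 α : Type*} [Field 𝕜]

theorem normalizedMass_union [Finite α] (p : α → 𝕜) {X Y : Set α} (h : Disjoint X Y) :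
    normalizedMass p (X ∪ Y) = normalizedMass p X + normalizedMass p Y := by
  rw [normalizedMass, finsum_mem_union h X.toFinite Y.toFinite, add_div, normalizedMass,
    normalizedMass]

variable [LinearOrder 𝕜] [IsStrictOrderedRing 𝕜] {p : α → 𝕜}

theorem normalizedMass_nonneg (hp : ∀ v, 0 ≤ p v) (X : Set α) : 0 ≤ normalizedMass p X :=
  div_nonneg (finsum_nonneg fun v => finsum_nonneg fun _ => hp v) (finsum_nonneg hp)

variable [Finite α] (hp : ∀ v, 0 < p v)
include hp

theorem normalizedMass_pos {X : Set α} (hX : X.Nonempty) : 0 < normalizedMass p X :=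
  have := hX.to_type
  div_pos (finsum_mem_pos_of_forall_pos hp hX) (finsum_pos_of_forall_pos hp)

theorem normalizedMass_univ [Nonempty α] : normalizedMass p Set.univ = 1 := by
  rw [normalizedMass, finsum_mem_univ, div_self (finsum_pos_of_forall_pos hp).ne']

theorem normalizedMass_le_one [Nonempty α] (X : Set α) : normalizedMass p X ≤ 1 := by
  rw [← normalizedMass_univ hp, ← Set.union_compl_self X,
    normalizedMass_union p disjoint_compl_right]
  exact le_add_of_nonneg_right (normalizedMass_nonneg (fun v => (hp v).le) Xᶜ)

theorem half_lt_normalizedMass_div {X C : Set α} (hC : C.Nonempty) :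
    1 / 2 < normalizedMass p X / normalizedMass p C ↔
      ∑ᶠ v ∈ C, p v < 2 * ∑ᶠ v ∈ X, p v := by
  have := hC.to_type
  rw [normalizedMass, normalizedMass, div_div_div_cancel_right₀ (finsum_pos_of_forall_pos hp).ne',
    div_lt_div_iff₀ two_pos (finsum_mem_pos_of_forall_pos hp hC), one_mul, mul_comm]

end NormalizedMass

namespace ENM

variable {W A : Type} (M : ENM W A)

theorem cl_eq_of_rel {w v : W} (h : M.R w v) : M.cl w = M.cl v :=
  Set.ext fun _ => ⟨M.equiv.trans (M.equiv.symm h), M.equiv.trans h⟩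

/-- The family `N w` transported to subsets of the class `[w]` regarded as a type. -/
def localFamily (w : W) : Set (Set (M.cl w)) := {X | (↑) '' X ∈ M.N w}

end ENM

namespace MidENM

variable {W A : Type} (M : MidENM W A)

theorem isMidThreshold_localFamily (w : W) : IsMidThreshold (M.localFamily w) where
  compl_notMem X hX := by
    change (↑) '' Xᶜ ∉ M.N w
    rw [Set.image_val_compl]
    exact M.d w _ hX
  mem_of_ssubset X Y hX hXY := by
    change (↑) '' Xᶜ ∉ M.N w at hX
    rw [Set.image_val_compl] at hX
    exact M.sc w _ _ (Subtype.coe_image_subset _ X) (Subtype.coe_image_subset _ Y) hX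
      (Subtype.val_injective.image_strictMono hXY)
  scott m X Y hcard hX₀ hX := by
    refine M.scott w m (fun i => Subtype.val '' X i) (fun i => Subtype.val '' Y i)
      (fun i => Subtype.coe_image_subset _ _) (fun i => Subtype.coe_image_subset _ _)
      (fun v => ?_) hX₀ fun i hi => ?_
    · by_cases hv : v ∈ M.cl w
      · simpa [hv] using hcard ⟨v, hv⟩
      · simp [hv]
    · have hXi : (↑) '' (X i)ᶜ ∉ M.N w := hX i hi
      rwa [Set.image_val_compl] at hXi

theorem exists_weights_cl (w : W) : ∃ p : W → ℚ, (∀ v ∈ M.cl w, 0 < p v) ∧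
    ∀ X ⊆ M.cl w, X ∈ M.N w ↔ ∑ᶠ v ∈ M.cl w, p v < 2 * ∑ᶠ v ∈ X, p v := by
  have := M.finite
  obtain ⟨q, hq, hqN⟩ := (M.isMidThreshold_localFamily w).exists_weights
  let p : W → ℚ := Function.extend Subtype.val q 0
  have hp : ∀ v : M.cl w, p v = q v := Subtype.val_injective.extend_apply q 0
  have hsum : ∀ X : Set (M.cl w), ∑ᶠ v ∈ Subtype.val '' X, p v = ∑ᶠ v ∈ X, q v := fun X => by
    simp only [finsum_mem_image Subtype.val_injective.injOn, hp]
  refine ⟨p, fun v hv => (hq ⟨v, hv⟩).trans_eq (hp ⟨v, hv⟩).symm, fun X hX => ?_⟩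
  obtain ⟨X, rfl⟩ : ∃ Y : Set (M.cl w), Subtype.val '' Y = X :=
    ⟨Subtype.val ⁻¹' X, by rwa [Subtype.image_preimage_coe, Set.inter_eq_right]⟩
  have hcl := hsum Set.univ
  rw [Set.image_univ, Subtype.range_coe, finsum_mem_univ] at hcl
  rw [hcl, hsum]
  exact hqN X

theorem exists_weights : ∃ p : W → ℚ, (∀ v, 0 < p v) ∧
    ∀ w, ∀ X ⊆ M.cl w, X ∈ M.N w ↔ ∑ᶠ v ∈ M.cl w, p v < 2 * ∑ᶠ v ∈ X, p v := by
  choose q hq hqN using M.exists_weights_cl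
  let S : Setoid W := ⟨M.R, M.equiv⟩
  let rep (v : W) : W := (Quotient.mk S v).out
  have hrep : ∀ v, M.R (rep v) v := Quotient.mk_out (s := S)
  refine ⟨fun v => q (rep v) v, fun v => hq (rep v) v (hrep v), fun w X hX => ?_⟩
  have hclass : ∀ v ∈ M.cl w, q (rep v) v = q (rep w) v := fun v hv => by
    have : Quotient.mk S w = Quotient.mk S v := Quotient.sound hv
    simp only [rep, this]
  rw [finsum_mem_congr rfl hclass, finsum_mem_congr rfl fun v hv => hclass v (hX hv),
    M.agreeN _ _ (hrep w), ← M.cl_eq_of_rel (hrep w)]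
  exact hqN (rep w) X (M.cl_eq_of_rel (hrep w) ▸ hX)

end MidENM

/-- Lenzen's theorem: every mid-threshold epistemic neighborhood model has an agreeing
probability measure for threshold `1/2`. -/
theorem lenzen_agreeing_measure {W A : Type} (M : MidENM W A) :
    ∃ P : Set W → ℝ,
      (∀ X : Set W, 0 ≤ P X) ∧ (∀ X : Set W, P X ≤ 1) ∧ P Set.univ = 1 ∧
      (∀ X Y : Set W, X ∩ Y = ∅ → P (X ∪ Y) = P X + P Y) ∧
      (∀ w : W, 0 < P {w}) ∧
      (∀ (w : W) (X : Set W), X ⊆ M.toENM.cl w →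
        (X ∈ M.N w ↔ 1/2 < P (X ∩ M.toENM.cl w) / P (M.toENM.cl w))) := by
  have := M.finite
  have := M.nonempty
  obtain ⟨p, hp, hpN⟩ := M.exists_weights
  refine ⟨fun X => (normalizedMass p X : ℚ), ?_⟩
  beta_reduce
  refine ⟨fun X => ?_, fun X => ?_, ?_, fun X Y hXY => ?_, fun w => ?_, fun w X hX => ?_⟩
  · exact_mod_cast normalizedMass_nonneg (fun v => (hp v).le) X
  · exact_mod_cast normalizedMass_le_one hp X
  · exact_mod_cast normalizedMass_univ hp
  · exact_mod_cast normalizedMass_union p (Set.disjoint_iff_inter_eq_empty.2 hXY)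
  · exact_mod_cast normalizedMass_pos hp (Set.singleton_nonempty w)
  · have hcl : (M.cl w).Nonempty := ⟨w, M.equiv.refl w⟩
    rw [hpN w X hX, Set.inter_eq_left.2 hX, ← half_lt_normalizedMass_div hp hcl,
      ← Rat.cast_lt (K := ℝ)]
    push_cast
    rfl
end

section
/- In the calculus KB the following are derivable for all formulas φ, ψ of L_KB: (1) Kφ → Bφ; (2) B(φ∧ψ) → (Bφ ∧ Bψ); (3) (Kφ ∧ Bψ) → B(φ∧ψ); (4) K(φ→ψ) → (¬B¬φ → ¬B¬ψ); (5) Bφ → BBφ; (6) ¬Bφ → B¬Bφ; (7) Bφ ↔ KBφ; (8) ¬Bφ ↔ K¬Bφ. Moreover, if KB ⊢ φ then KB ⊢ Bφ, and if KB ⊢ φ → ψ then KB ⊢ Bφ → Bψ, and if KB ⊢ φ → ⊥ then KB ⊢ ¬Bφ. -/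
open Classical

/-- The language `L_KB`: `φ ::= ⊤ | p | ¬φ | φ∧φ | Kφ | Bφ`. -/
inductive Form (A : Type) : Type where
  | top : Form A
  | atom : A → Form A
  | neg : Form A → Form A
  | and : Form A → Form A → Form A
  | K : Form A → Form A
  | B : Form A → Form A

namespace Form

/-- Material implication abbreviation. -/
def imp {A : Type} (φ ψ : Form A) : Form A := Form.neg (Form.and φ (Form.neg ψ))

/-- Disjunction abbreviation. -/
def or {A : Type} (φ ψ : Form A) : Form A := Form.neg (Form.and (Form.neg φ) (Form.neg ψ))

/-- Falsehood `⊥ := ¬⊤`. -/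
def bot {A : Type} : Form A := Form.neg Form.top

/-- Biconditional abbreviation. -/
def iff {A : Type} (φ ψ : Form A) : Form A := Form.and (Form.imp φ ψ) (Form.imp ψ φ)

end Form

/-- Boolean evaluation of a formula under a valuation of "atomic" formulas
(propositional letters and formulas of the form `Kφ` or `Bφ`). -/
def evalb {A : Type} (v : Form A → Bool) : Form A → Bool
  | Form.top => true
  | Form.atom p => v (Form.atom p)
  | Form.neg φ => !(evalb v φ)
  | Form.and φ ψ => evalb v φ && evalb v ψ
  | Form.K φ => v (Form.K φ)
  | Form.B φ => v (Form.B φ)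

/-- `φ` is a propositional tautology (treating `Kψ` and `Bψ` as atoms). -/
def Taut {A : Type} (φ : Form A) : Prop := ∀ v : Form A → Bool, evalb v φ = true

/-- The Hilbert calculus `KB`. -/
inductive KB {A : Type} : Form A → Prop where
  | taut {φ : Form A} : Taut φ → KB φ
  | kdist (φ ψ : Form A) :
      KB (Form.imp (Form.K (Form.imp φ ψ)) (Form.imp (Form.K φ) (Form.K ψ)))
  | kt (φ : Form A) : KB (Form.imp (Form.K φ) φ)
  | k4 (φ : Form A) : KB (Form.imp (Form.K φ) (Form.K (Form.K φ)))
  | k5 (φ : Form A) : KB (Form.imp (Form.neg (Form.K φ)) (Form.K (Form.neg (Form.K φ))))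
  | bf : KB (Form.neg (Form.B (Form.bot)))
  | bn : KB (Form.B Form.top)
  | ap (φ : Form A) : KB (Form.imp (Form.B φ) (Form.K (Form.B φ)))
  | an (φ : Form A) : KB (Form.imp (Form.neg (Form.B φ)) (Form.K (Form.neg (Form.B φ))))
  | kbm (φ ψ : Form A) :
      KB (Form.imp (Form.K (Form.imp φ ψ)) (Form.imp (Form.B φ) (Form.B ψ)))
  | mp {φ ψ : Form A} : KB (Form.imp φ ψ) → KB φ → KB ψ
  | nec {φ : Form A} : KB φ → KB (Form.K φ)

/-!
Monotonicity of `K` turns a derivable `φ → (ψ → χ)` into `Kφ → K(ψ → χ)`, and (KBM) continues this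
to `Kφ → (Bψ → Bχ)`. The tautologies `φ → (⊤ → φ)`, `φ → (ψ → φ ∧ ψ)` and
`(φ → ψ) → (¬ψ → ¬φ)` then give (1), where `B⊤` is discharged by (N), (3) and (4).
Through (1), the mixed introspection axioms (Ap) and (An) become introspection for `B`.
-/

theorem evalb_imp {A : Type} (v : Form A → Bool) (φ ψ : Form A) :
    evalb v (φ.imp ψ) = (!evalb v φ || evalb v ψ) := by
  simp only [Form.imp, evalb, Bool.not_and, Bool.not_not]

namespace KB

variable {A : Type} {φ ψ χ : Form A}

theorem imp_trans (h₁ : KB (φ.imp ψ)) (h₂ : KB (ψ.imp χ)) : KB (φ.imp χ) :=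
  mp (mp (taut fun v => by grind [evalb_imp]) h₁) h₂

theorem imp_swap (h : KB (φ.imp (ψ.imp χ))) : KB (ψ.imp (φ.imp χ)) :=
  mp (taut fun v => by grind [evalb_imp]) h

theorem and_imp_of_imp_imp (h : KB (φ.imp (ψ.imp χ))) : KB ((φ.and ψ).imp χ) :=
  mp (taut fun v => by grind [evalb, evalb_imp]) h

theorem and_imp_left (φ ψ : Form A) : KB ((φ.and ψ).imp φ) :=
  taut fun v => by grind [evalb, evalb_imp]

theorem and_imp_right (φ ψ : Form A) : KB ((φ.and ψ).imp ψ) :=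
  taut fun v => by grind [evalb, evalb_imp]

theorem imp_imp_self (φ ψ : Form A) : KB (φ.imp (ψ.imp φ)) :=
  taut fun v => by grind [evalb_imp]

theorem imp_imp_and (φ ψ : Form A) : KB (φ.imp (ψ.imp (φ.and ψ))) :=
  taut fun v => by grind [evalb, evalb_imp]

theorem imp_and (h₁ : KB (φ.imp ψ)) (h₂ : KB (φ.imp χ)) : KB (φ.imp (ψ.and χ)) :=
  mp (mp (taut fun v => by grind [evalb, evalb_imp]) h₁) h₂

theorem iff_intro (h₁ : KB (φ.imp ψ)) (h₂ : KB (ψ.imp φ)) : KB (φ.iff ψ) :=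
  mp (mp (imp_imp_and (φ.imp ψ) (ψ.imp φ)) h₁) h₂

theorem contrapose (φ ψ : Form A) : KB ((φ.imp ψ).imp (ψ.neg.imp φ.neg)) :=
  taut fun v => by grind [evalb, evalb_imp]

theorem mt (h : KB (φ.imp ψ)) (hψ : KB ψ.neg) : KB φ.neg :=
  mp (mp (contrapose φ ψ) h) hψ

theorem K_mono (h : KB (φ.imp ψ)) : KB (φ.K.imp ψ.K) :=
  mp (kdist φ ψ) (nec h)

theorem B_mono (h : KB (φ.imp ψ)) : KB (φ.B.imp ψ.B) :=
  mp (kbm φ ψ) (nec h)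

theorem K_imp_B_imp_B (h : KB (φ.imp (ψ.imp χ))) : KB (φ.K.imp (ψ.B.imp χ.B)) :=
  imp_trans (K_mono h) (kbm ψ χ)

theorem K_imp_B (φ : Form A) : KB (φ.K.imp φ.B) :=
  mp (imp_swap (K_imp_B_imp_B (imp_imp_self φ Form.top))) bn

theorem B_and_imp (φ ψ : Form A) : KB ((φ.and ψ).B.imp (φ.B.and ψ.B)) :=
  imp_and (B_mono (and_imp_left φ ψ)) (B_mono (and_imp_right φ ψ))

theorem K_and_B_imp_B_and (φ ψ : Form A) : KB ((φ.K.and ψ.B).imp (φ.and ψ).B) :=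
  and_imp_of_imp_imp (K_imp_B_imp_B (imp_imp_and φ ψ))

theorem K_imp_dual_B_imp_dual_B (φ ψ : Form A) :
    KB ((φ.imp ψ).K.imp (φ.neg.B.neg.imp ψ.neg.B.neg)) :=
  imp_trans (K_imp_B_imp_B (contrapose φ ψ)) (contrapose ψ.neg.B φ.neg.B)

theorem B_imp_B_B (φ : Form A) : KB (φ.B.imp φ.B.B) :=
  imp_trans (ap φ) (K_imp_B φ.B)

theorem neg_B_imp_B_neg_B (φ : Form A) : KB (φ.B.neg.imp φ.B.neg.B) :=
  imp_trans (an φ) (K_imp_B φ.B.neg)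

theorem B_iff_K_B (φ : Form A) : KB (φ.B.iff φ.B.K) :=
  iff_intro (ap φ) (kt φ.B)

theorem neg_B_iff_K_neg_B (φ : Form A) : KB (φ.B.neg.iff φ.B.neg.K) :=
  iff_intro (an φ) (kt φ.B.neg)

theorem B_nec (h : KB φ) : KB φ.B :=
  mp (K_imp_B φ) (nec h)

theorem neg_B_of_imp_bot (h : KB (φ.imp Form.bot)) : KB φ.B.neg :=
  mt (B_mono h) bf

end KB

/-- The `KB` derivables of Theorem "KB Derivables". -/
theorem KB_derivables {A : Type} :
    (∀ φ ψ : Form A,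
      KB (Form.imp (Form.K φ) (Form.B φ)) ∧
      KB (Form.imp (Form.B (Form.and φ ψ)) (Form.and (Form.B φ) (Form.B ψ))) ∧
      KB (Form.imp (Form.and (Form.K φ) (Form.B ψ)) (Form.B (Form.and φ ψ))) ∧
      KB (Form.imp (Form.K (Form.imp φ ψ))
            (Form.imp (Form.neg (Form.B (Form.neg φ))) (Form.neg (Form.B (Form.neg ψ))))) ∧
      KB (Form.imp (Form.B φ) (Form.B (Form.B φ))) ∧
      KB (Form.imp (Form.neg (Form.B φ)) (Form.B (Form.neg (Form.B φ)))) ∧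
      KB (Form.iff (Form.B φ) (Form.K (Form.B φ))) ∧
      KB (Form.iff (Form.neg (Form.B φ)) (Form.K (Form.neg (Form.B φ))))) ∧
    (∀ φ : Form A, KB φ → KB (Form.B φ)) ∧
    (∀ φ ψ : Form A, KB (Form.imp φ ψ) → KB (Form.imp (Form.B φ) (Form.B ψ))) ∧
    (∀ φ : Form A, KB (Form.imp φ Form.bot) → KB (Form.neg (Form.B φ))) := by
  exact
    ⟨fun φ ψ =>
      ⟨KB.K_imp_B φ,
        KB.B_and_imp φ ψ,
        KB.K_and_B_imp_B_and φ ψ,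
        KB.K_imp_dual_B_imp_dual_B φ ψ,
        KB.B_imp_B_B φ,
        KB.neg_B_imp_B_neg_B φ,
        KB.B_iff_K_B φ,
        KB.neg_B_iff_K_neg_B φ⟩,
      fun _ => KB.B_nec,
      fun _ _ => KB.B_mono,
      fun _ => KB.neg_B_of_imp_bot⟩
end

section
/- The calculus KB is sound and complete with respect to the class of epistemic neighborhood models: for every formula φ of L_KB, KB ⊢ φ if and only if M,w ⊨ φ for every epistemic neighborhood model M and every world w of M. -/
open Classical

/-- Truth set of a formula in an epistemic neighborhood model. -/
def nsem {W A : Type} (M : ENM W A) : Form A → Set W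
  | Form.top => Set.univ
  | Form.atom p => {w | p ∈ M.V w}
  | Form.neg φ => (nsem M φ)ᶜ
  | Form.and φ ψ => nsem M φ ∩ nsem M ψ
  | Form.K φ => {w | M.cl w ⊆ nsem M φ}
  | Form.B φ => {w | M.cl w ∩ nsem M φ ∈ M.N w}

/-!
Every axiom expresses a closure property of `N` or the constancy of `N` on equivalence classes,
which gives soundness. For completeness, a non-theorem `φ` is omitted by some maximal consistent
set. The canonical model on all maximal consistent sets is infinite, so it is filtered through a
finite subformula-closed set `S` containing `φ` and `B⊤`: worlds are the traces `Γ ∩ S`, two worlds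
are equivalent when they contain the same formulas `Kθ`, `Bθ`, and `N w` is generated by the sets
`[w] ∩ {v | χ ∈ v}` with `Bχ ∈ w`. Truth at a world is membership. Maximal consistent sets with the
same modal formulas have equivalent traces, so the inclusion `[w] ∩ {v | χ ∈ v} ⊆ {v | ψ ∈ v}`
forces `K(χ → ψ)` into every maximal consistent set with trace `w`, and (KBM) turns `Bχ` into `Bψ`.
-/

namespace Form

/-- The formulas `Kθ` and `Bθ`, i.e. those whose truth value depends only on the equivalence class
of the world. -/
def modalFormulas (A : Type) : Set (Form A) := Set.range Form.K ∪ Set.range Form.B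

/-- The modal formulas of `Γ`, encoding what the agent knows and believes according to `Γ`. -/
def modalPart {A : Type} (Γ : Set (Form A)) : Set (Form A) := Γ ∩ modalFormulas A

/-- The immediate subformulas of a formula. -/
def immediateSubformulas {A : Type} : Form A → Set (Form A)
  | top => ∅
  | atom _ => ∅
  | neg φ => {φ}
  | and φ ψ => {φ, ψ}
  | K φ => {φ}
  | B φ => {φ}

/-- Closure of a set of formulas under subformulas, taken one constructor at a time. -/
def SubformulaClosed {A : Type} (S : Set (Form A)) : Prop :=
  ∀ φ ∈ S, immediateSubformulas φ ⊆ S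

variable {A : Type} {Γ S T : Set (Form A)} {φ : Form A}

theorem K_mem_modalFormulas (φ : Form A) : K φ ∈ modalFormulas A := Or.inl ⟨φ, rfl⟩

theorem B_mem_modalFormulas (φ : Form A) : B φ ∈ modalFormulas A := Or.inr ⟨φ, rfl⟩

theorem K_mem_modalPart_iff : K φ ∈ modalPart Γ ↔ K φ ∈ Γ :=
  and_iff_left (K_mem_modalFormulas φ)

theorem B_mem_modalPart_iff : B φ ∈ modalPart Γ ↔ B φ ∈ Γ :=
  and_iff_left (B_mem_modalFormulas φ)

theorem modalPart_inter (Γ S : Set (Form A)) : modalPart (Γ ∩ S) = modalPart Γ ∩ S :=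
  Set.inter_right_comm Γ S (modalFormulas A)

theorem SubformulaClosed.union (hS : SubformulaClosed S) (hT : SubformulaClosed T) :
    SubformulaClosed (S ∪ T) := by
  rintro φ (hφ | hφ)
  · exact (hS φ hφ).trans Set.subset_union_left
  · exact (hT φ hφ).trans Set.subset_union_right

theorem SubformulaClosed.insert (hS : SubformulaClosed S) (hφ : immediateSubformulas φ ⊆ S) :
    SubformulaClosed (insert φ S) := by
  rintro ψ (rfl | hψ)
  · exact hφ.trans (Set.subset_insert _ S)
  · exact (hS ψ hψ).trans (Set.subset_insert _ S)

theorem exists_finite_subformulaClosed_mem (φ : Form A) :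
    ∃ S : Set (Form A), S.Finite ∧ SubformulaClosed S ∧ φ ∈ S := by
  suffices h : ∃ S : Set (Form A), S.Finite ∧ SubformulaClosed S ∧ immediateSubformulas φ ⊆ S by
    obtain ⟨S, hfin, hS, hφ⟩ := h
    exact ⟨insert φ S, hfin.insert φ, hS.insert hφ, Set.mem_insert φ S⟩
  induction φ with
  | top | atom p => exact ⟨∅, Set.finite_empty, fun _ h => h.elim, Set.empty_subset _⟩
  | neg φ ih | K φ ih | B φ ih =>
    obtain ⟨S, hfin, hS, hφ⟩ := ih
    exact ⟨insert φ S, hfin.insert φ, hS.insert hφ,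
      Set.singleton_subset_iff.2 (Set.mem_insert φ S)⟩
  | and φ ψ ihφ ihψ =>
    obtain ⟨S, hfinS, hS, hφ⟩ := ihφ
    obtain ⟨T, hfinT, hT, hψ⟩ := ihψ
    exact ⟨insert φ S ∪ insert ψ T, (hfinS.insert φ).union (hfinT.insert ψ),
      (hS.insert hφ).union (hT.insert hψ),
      Set.pair_subset (Or.inl (Set.mem_insert φ S)) (Or.inr (Set.mem_insert ψ T))⟩

end Form

section Soundness

open Form

variable {W A : Type} {M : ENM W A} {w v : W} {φ ψ : Form A}

theorem ENM.mem_cl_self (M : ENM W A) (w : W) : w ∈ M.cl w := M.equiv.refl w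

theorem ENM.cl_eq_of_mem (hv : v ∈ M.cl w) : M.cl v = M.cl w :=
  Set.ext fun _ => ⟨M.equiv.trans hv, M.equiv.trans (M.equiv.symm hv)⟩

theorem mem_nsem_imp : w ∈ nsem M (imp φ ψ) ↔ (w ∈ nsem M φ → w ∈ nsem M ψ) := by
  simp [imp, nsem]

theorem nsem_bot : nsem M bot = ∅ := Set.compl_univ

theorem mem_nsem_congr_of_modal (hφ : φ ∈ modalFormulas A) (hv : v ∈ M.cl w) :
    v ∈ nsem M φ ↔ w ∈ nsem M φ := by
  rcases hφ with ⟨θ, rfl⟩ | ⟨θ, rfl⟩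
  · simp only [nsem, Set.mem_ofPred_eq, ENM.cl_eq_of_mem hv]
  · simp only [nsem, Set.mem_ofPred_eq, ENM.cl_eq_of_mem hv, M.agreeN w v hv]

theorem mem_nsem_imp_K_of_modal (hφ : φ ∈ modalFormulas A) : w ∈ nsem M (imp φ (K φ)) :=
  mem_nsem_imp.2 fun hw _ hv => (mem_nsem_congr_of_modal hφ hv).2 hw

theorem mem_nsem_neg_imp_K_neg_of_modal (hφ : φ ∈ modalFormulas A) :
    w ∈ nsem M (imp (neg φ) (K (neg φ))) :=
  mem_nsem_imp.2 fun hw _ hv => mt (mem_nsem_congr_of_modal hφ hv).1 hw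

theorem mem_nsem_B_mono (hK : w ∈ nsem M (K (imp φ ψ))) (hB : w ∈ nsem M (B φ)) :
    w ∈ nsem M (B ψ) :=
  M.kbm w _ hB _ (fun _ hv => ⟨hv.1, mem_nsem_imp.1 (hK hv.1) hv.2⟩) Set.inter_subset_left

theorem evalb_decide_mem_nsem (M : ENM W A) (w : W) (φ : Form A) :
    evalb (fun χ => decide (w ∈ nsem M χ)) φ = decide (w ∈ nsem M φ) := by
  induction φ with
  | top => simp [evalb, nsem]
  | atom _ | K _ _ | B _ _ => rfl
  | neg φ ih => simp [evalb, nsem, ih]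
  | and φ ψ ihφ ihψ => simp [evalb, nsem, ihφ, ihψ]

theorem Taut.mem_nsem (h : Taut φ) (M : ENM W A) (w : W) : w ∈ nsem M φ :=
  of_decide_eq_true ((evalb_decide_mem_nsem M w φ).symm.trans (h _))

theorem KB.sound (h : KB φ) (M : ENM W A) (w : W) : w ∈ nsem M φ := by
  induction h generalizing w with
  | taut h => exact h.mem_nsem M w
  | kdist φ ψ =>
    exact mem_nsem_imp.2 fun himp => mem_nsem_imp.2 fun hφ _ hv =>
      mem_nsem_imp.1 (himp hv) (hφ hv)
  | kt φ => exact mem_nsem_imp.2 fun hK => hK (M.mem_cl_self w)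
  | k4 φ => exact mem_nsem_imp_K_of_modal (K_mem_modalFormulas φ)
  | k5 φ => exact mem_nsem_neg_imp_K_neg_of_modal (K_mem_modalFormulas φ)
  | bf =>
    change M.cl w ∩ nsem M bot ∉ M.N w
    rw [nsem_bot, Set.inter_empty]
    exact M.kbf w
  | bn =>
    change M.cl w ∩ Set.univ ∈ M.N w
    rw [Set.inter_univ]
    exact M.contains_class w
  | ap φ => exact mem_nsem_imp_K_of_modal (B_mem_modalFormulas φ)
  | an φ => exact mem_nsem_neg_imp_K_neg_of_modal (B_mem_modalFormulas φ)
  | kbm φ ψ => exact mem_nsem_imp.2 fun hK => mem_nsem_imp.2 fun hB => mem_nsem_B_mono hK hB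
  | mp _ _ ihimp ih => exact mem_nsem_imp.1 (ihimp w) (ih w)
  | nec _ ih => exact fun v _ => ih v

end Soundness

section Derivability

open Form

variable {A : Type} {Γ Δ : Set (Form A)} {φ ψ χ : Form A} {v : Form A → Bool}

/-- Local derivability of a formula from the hypotheses `Γ` in `KB`. Necessitation is available
for theorems only, so that the deduction theorem holds. -/
inductive Derives (Γ : Set (Form A)) : Form A → Prop where
  | thm {φ : Form A} : KB φ → Derives Γ φ
  | hyp {φ : Form A} : φ ∈ Γ → Derives Γ φ
  | mp {φ ψ : Form A} : Derives Γ (imp φ ψ) → Derives Γ φ → Derives Γ ψ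

theorem evalb_neg : evalb v (neg φ) = true ↔ ¬evalb v φ = true := by
  simp [evalb]

theorem evalb_and : evalb v (and φ ψ) = true ↔ evalb v φ = true ∧ evalb v ψ = true := by
  simp [evalb]

theorem evalb_imp_s14 : evalb v (imp φ ψ) = true ↔ (evalb v φ = true → evalb v ψ = true) := by
  rw [imp, evalb_neg, evalb_and, evalb_neg, not_and_not_right]

namespace Derives

theorem taut_mp (h : ∀ v, evalb v φ = true → evalb v ψ = true) (hφ : Derives Γ φ) :
    Derives Γ ψ :=
  .mp (.thm (.taut fun v => evalb_imp_s14.2 (h v))) hφ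

theorem taut_mp₂ (h : ∀ v, evalb v φ = true → evalb v ψ = true → evalb v χ = true)
    (hφ : Derives Γ φ) (hψ : Derives Γ ψ) : Derives Γ χ :=
  .mp (hφ.taut_mp fun v hv => evalb_imp_s14.2 (h v hv)) hψ

theorem imp_of_insert (h : Derives (insert χ Γ) φ) : Derives Γ (imp χ φ) := by
  induction h with
  | thm h => exact (thm h).taut_mp fun _ hφ => evalb_imp_s14.2 fun _ => hφ
  | hyp h =>
    rcases h with rfl | h
    · exact .thm (.taut fun _ => evalb_imp_s14.2 id)
    · exact (hyp h).taut_mp fun _ hφ => evalb_imp_s14.2 fun _ => hφ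
  | mp _ _ ihimp ih =>
    refine ihimp.taut_mp₂ (fun v himp hφ => ?_) ih
    rw [evalb_imp_s14] at himp hφ ⊢
    rw [evalb_imp_s14] at himp
    exact fun hχ => himp hχ (hφ hχ)

theorem mono (hΓΔ : Γ ⊆ Δ) (h : Derives Γ φ) : Derives Δ φ := by
  induction h with
  | thm h => exact .thm h
  | hyp h => exact .hyp (hΓΔ h)
  | mp _ _ ihimp ih => exact .mp ihimp ih

theorem kb_of_empty (h : Derives ∅ φ) : KB φ := by
  induction h with
  | thm h => exact h
  | hyp h => exact h.elim
  | mp _ _ ihimp ih => exact .mp ihimp ih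

theorem exists_mem_of_sUnion {c : Set (Set (Form A))} (hc : DirectedOn (· ⊆ ·) c)
    (hne : c.Nonempty) (h : Derives (⋃₀ c) φ) : ∃ Γ ∈ c, Derives Γ φ := by
  induction h with
  | thm h => exact ⟨hne.some, hne.some_mem, .thm h⟩
  | hyp h =>
    obtain ⟨Γ, hΓ, hφ⟩ := h
    exact ⟨Γ, hΓ, .hyp hφ⟩
  | mp _ _ ihimp ih =>
    obtain ⟨Γ₁, hΓ₁, himp⟩ := ihimp
    obtain ⟨Γ₂, hΓ₂, hφ⟩ := ih
    obtain ⟨Γ, hΓ, h₁, h₂⟩ := hc Γ₁ hΓ₁ Γ₂ hΓ₂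
    exact ⟨Γ, hΓ, .mp (himp.mono h₁) (hφ.mono h₂)⟩

end Derives

end Derivability

section MaximalConsistent

open Form

variable {A : Type} {Γ Δ : Set (Form A)} {φ ψ : Form A}

/-- Maximal consistent sets, presented as the deductively closed sets containing exactly one of
`φ` and `¬φ` for each formula `φ`. -/
structure IsMaximalConsistent (Γ : Set (Form A)) : Prop where
  mem_of_derives {φ : Form A} : Derives Γ φ → φ ∈ Γ
  neg_mem_iff {φ : Form A} : neg φ ∈ Γ ↔ φ ∉ Γ

theorem isMaximalConsistent_of_maximal (hΓ : Maximal (fun Δ => ¬Derives Δ ψ) Γ) :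
    IsMaximalConsistent Γ := by
  have imp_of_notMem {χ : Form A} (hχ : χ ∉ Γ) : Derives Γ (imp χ ψ) :=
    Derives.imp_of_insert (not_not.1 (hΓ.not_prop_of_ssuperset (Set.ssubset_insert hχ)))
  refine ⟨fun {φ} hφ => ?_, fun {φ} => ⟨fun hneg hφ => hΓ.prop ?_, fun hφ => ?_⟩⟩
  · by_contra hφΓ
    exact hΓ.prop (.mp (imp_of_notMem hφΓ) hφ)
  · exact (Derives.hyp hφ).taut_mp₂ (fun v h hn => absurd h (evalb_neg.1 hn)) (.hyp hneg)
  · by_contra hneg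
    refine hΓ.prop ((imp_of_notMem hφ).taut_mp₂ (fun v h hn => ?_) (imp_of_notMem hneg))
    rw [evalb_imp_s14] at h hn
    exact Classical.byCases h (hn ∘ evalb_neg.2)

theorem exists_isMaximalConsistent_notMem (h : ¬Derives Γ ψ) :
    ∃ Δ, Γ ⊆ Δ ∧ IsMaximalConsistent Δ ∧ ψ ∉ Δ := by
  obtain ⟨Δ, hΓΔ, hΔ⟩ := zorn_subset_nonempty {Δ : Set (Form A) | ¬Derives Δ ψ}
    (fun c hcs hc hne => by
      refine ⟨⋃₀ c, fun hψ => ?_, fun _ => Set.subset_sUnion_of_mem⟩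
      obtain ⟨Θ, hΘ, hΘψ⟩ := hψ.exists_mem_of_sUnion hc.directedOn hne
      exact hcs hΘ hΘψ) Γ h
  exact ⟨Δ, hΓΔ, isMaximalConsistent_of_maximal hΔ, fun hψ => hΔ.prop (.hyp hψ)⟩

theorem KB.imp_K_of_modal (hφ : φ ∈ modalFormulas A) : KB (imp φ (K φ)) := by
  rcases hφ with ⟨θ, rfl⟩ | ⟨θ, rfl⟩
  · exact .k4 θ
  · exact .ap θ

theorem KB.neg_imp_K_neg_of_modal (hφ : φ ∈ modalFormulas A) :
    KB (imp (neg φ) (K (neg φ))) := by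
  rcases hφ with ⟨θ, rfl⟩ | ⟨θ, rfl⟩
  · exact .k5 θ
  · exact .an θ

namespace IsMaximalConsistent

theorem mem_of_kb (hΓ : IsMaximalConsistent Γ) (h : KB φ) : φ ∈ Γ :=
  hΓ.mem_of_derives (.thm h)

theorem mem_of_imp_mem (hΓ : IsMaximalConsistent Γ) (himp : imp φ ψ ∈ Γ) (hφ : φ ∈ Γ) : ψ ∈ Γ :=
  hΓ.mem_of_derives (.mp (.hyp himp) (.hyp hφ))

theorem and_mem_iff (hΓ : IsMaximalConsistent Γ) : and φ ψ ∈ Γ ↔ φ ∈ Γ ∧ ψ ∈ Γ where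
  mp h :=
    ⟨hΓ.mem_of_derives ((Derives.hyp h).taut_mp fun _ hv => (evalb_and.1 hv).1),
      hΓ.mem_of_derives ((Derives.hyp h).taut_mp fun _ hv => (evalb_and.1 hv).2)⟩
  mpr h := hΓ.mem_of_derives
    ((Derives.hyp h.1).taut_mp₂ (fun _ hφ hψ => evalb_and.2 ⟨hφ, hψ⟩) (.hyp h.2))

theorem imp_mem_iff (hΓ : IsMaximalConsistent Γ) : imp φ ψ ∈ Γ ↔ (φ ∈ Γ → ψ ∈ Γ) := by
  rw [imp, hΓ.neg_mem_iff, hΓ.and_mem_iff, hΓ.neg_mem_iff, not_and_not_right]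

theorem K_mem_of_derives (hΓ : IsMaximalConsistent Γ) (h : Derives {θ | K θ ∈ Γ} φ) :
    K φ ∈ Γ := by
  induction h with
  | thm h => exact hΓ.mem_of_kb h.nec
  | hyp h => exact h
  | mp _ _ ihimp ih =>
    exact hΓ.mem_of_imp_mem (hΓ.mem_of_imp_mem (hΓ.mem_of_kb (.kdist _ _)) ihimp) ih

theorem modalPart_eq_of_subset (hΓ : IsMaximalConsistent Γ) (hΔ : IsMaximalConsistent Δ)
    (h : {θ | K θ ∈ Γ} ⊆ Δ) : modalPart Δ = modalPart Γ := by
  ext θ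
  refine and_congr_left fun hθ => ⟨fun hθΔ => ?_, fun hθΓ => ?_⟩
  · by_contra hθΓ
    have hneg : neg θ ∈ Δ :=
      h (hΓ.mem_of_imp_mem (hΓ.mem_of_kb (.neg_imp_K_neg_of_modal hθ)) (hΓ.neg_mem_iff.2 hθΓ))
    exact hΔ.neg_mem_iff.1 hneg hθΔ
  · exact h (hΓ.mem_of_imp_mem (hΓ.mem_of_kb (.imp_K_of_modal hθ)) hθΓ)

theorem mem_of_K_mem (hΓ : IsMaximalConsistent Γ) (h : K φ ∈ Γ) : φ ∈ Γ :=
  hΓ.mem_of_imp_mem (hΓ.mem_of_kb (.kt φ)) h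

theorem K_mem_of_forall (hΓ : IsMaximalConsistent Γ)
    (h : ∀ Δ, IsMaximalConsistent Δ → modalPart Δ = modalPart Γ → φ ∈ Δ) : K φ ∈ Γ := by
  by_contra hK
  obtain ⟨Δ, hsub, hΔ, hφ⟩ := exists_isMaximalConsistent_notMem (mt hΓ.K_mem_of_derives hK)
  exact hφ (h Δ hΔ (hΓ.modalPart_eq_of_subset hΔ hsub))

theorem B_mem_of_forall (hΓ : IsMaximalConsistent Γ) (hB : B φ ∈ Γ)
    (h : ∀ Δ, IsMaximalConsistent Δ → modalPart Δ = modalPart Γ → φ ∈ Δ → ψ ∈ Δ) :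
    B ψ ∈ Γ := by
  have hK : K (imp φ ψ) ∈ Γ := hΓ.K_mem_of_forall fun Δ hΔ hmod => hΔ.imp_mem_iff.2 (h Δ hΔ hmod)
  exact hΓ.mem_of_imp_mem (hΓ.mem_of_imp_mem (hΓ.mem_of_kb (.kbm φ ψ)) hK) hB

end IsMaximalConsistent

end MaximalConsistent

section Filtration

open Form

variable {A : Type} {S : Set (Form A)} {φ : Form A}

/-- The traces on `S` of the maximal consistent sets, which are the worlds of the filtration
through `S`. -/
def traces (S : Set (Form A)) : Set (Set (Form A)) :=
  {s | ∃ Γ, IsMaximalConsistent Γ ∧ Γ ∩ S = s}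

/-- The traces equivalent to `w`, i.e. those with the same modal formulas. -/
def traceClass (w : traces S) : Set (traces S) :=
  {v | modalPart v.1 = modalPart w.1}

/-- The neighborhoods of the trace `w`: the subsets of its class that contain
`traceClass w ∩ {v | χ ∈ v}` for some `χ` believed at `w`. -/
def traceNbhds (w : traces S) : Set (Set (traces S)) :=
  {X | X ⊆ traceClass w ∧ ∃ χ, B χ ∈ w.1 ∧ traceClass w ∩ {v | χ ∈ v.1} ⊆ X}

theorem finite_traces (hS : S.Finite) : (traces S).Finite :=
  hS.finite_subsets.subset fun _ ⟨_, _, h⟩ => h ▸ Set.inter_subset_right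

theorem IsMaximalConsistent.inter_mem_traces {Γ : Set (Form A)} (hΓ : IsMaximalConsistent Γ) :
    Γ ∩ S ∈ traces S :=
  ⟨Γ, hΓ, rfl⟩

theorem modalPart_inter_congr {Γ Δ : Set (Form A)} (h : modalPart Δ = modalPart Γ) :
    modalPart (Δ ∩ S) = modalPart (Γ ∩ S) := by
  rw [modalPart_inter, modalPart_inter, h]

theorem traceClass_congr {w v : traces S} (h : v ∈ traceClass w) :
    traceClass v = traceClass w :=
  Set.ext fun _ => ⟨fun hu => hu.trans h, fun hu => hu.trans (Eq.symm h)⟩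

theorem traceNbhds_congr {w v : traces S} (h : v ∈ traceClass w) :
    traceNbhds v = traceNbhds w := by
  have hB (χ : Form A) : B χ ∈ v.1 ↔ B χ ∈ w.1 := by
    rw [← B_mem_modalPart_iff, show modalPart v.1 = modalPart w.1 from h, B_mem_modalPart_iff]
  simp only [traceNbhds, traceClass_congr h, hB]

theorem empty_notMem_traceNbhds (hS : SubformulaClosed S) (w : traces S) :
    ∅ ∉ traceNbhds w := by
  obtain ⟨_, Γ, hΓ, rfl⟩ := w
  rintro ⟨-, χ, ⟨hχΓ, hχS⟩, hempty⟩
  have hbot : B bot ∈ Γ := hΓ.B_mem_of_forall hχΓ fun Δ hΔ hmod hχΔ =>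
    (@hempty ⟨Δ ∩ S, hΔ.inter_mem_traces⟩
      ⟨modalPart_inter_congr hmod, hχΔ, hS _ hχS rfl⟩).elim
  exact hΓ.neg_mem_iff.1 (hΓ.mem_of_kb .bf) hbot

theorem traceClass_mem_traceNbhds (hS : B top ∈ S) (w : traces S) :
    traceClass w ∈ traceNbhds w := by
  obtain ⟨_, Γ, hΓ, rfl⟩ := w
  exact ⟨subset_rfl, top, ⟨hΓ.mem_of_kb .bn, hS⟩, Set.inter_subset_left⟩

theorem K_mem_trace_iff (hK : K φ ∈ S) (hφ : φ ∈ S) (w : traces S) :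
    K φ ∈ w.1 ↔ ∀ v ∈ traceClass w, φ ∈ v.1 := by
  constructor
  · rintro h ⟨_, Δ, hΔ, rfl⟩ (hv : modalPart (Δ ∩ S) = modalPart w.1)
    have hKv : K φ ∈ Δ ∩ S := K_mem_modalPart_iff.1 (hv ▸ K_mem_modalPart_iff.2 h)
    exact ⟨hΔ.mem_of_K_mem hKv.1, hφ⟩
  · obtain ⟨_, Γ, hΓ, rfl⟩ := w
    refine fun h => ⟨hΓ.K_mem_of_forall fun Δ hΔ hmod => ?_, hK⟩
    exact (h ⟨Δ ∩ S, hΔ.inter_mem_traces⟩ (modalPart_inter_congr hmod)).1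

theorem B_mem_trace_iff (hS : SubformulaClosed S) (hB : B φ ∈ S) (w : traces S) :
    B φ ∈ w.1 ↔ traceClass w ∩ {v | φ ∈ v.1} ∈ traceNbhds w := by
  refine ⟨fun h => ⟨Set.inter_subset_left, φ, h, subset_rfl⟩, ?_⟩
  obtain ⟨_, Γ, hΓ, rfl⟩ := w
  rintro ⟨-, χ, ⟨hχΓ, hχS⟩, hsub⟩
  refine ⟨hΓ.B_mem_of_forall hχΓ fun Δ hΔ hmod hχΔ => ?_, hB⟩
  exact (@hsub ⟨Δ ∩ S, hΔ.inter_mem_traces⟩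
    ⟨modalPart_inter_congr hmod, hχΔ, hS _ hχS rfl⟩).2.1

/-- The filtration of the canonical model through a finite subformula-closed set `S`
that contains `B⊤`. -/
def filtration (hfin : S.Finite) (hS : SubformulaClosed S) (htop : B top ∈ S)
    (hne : Nonempty (traces S)) : ENM (traces S) A where
  finite := finite_traces hfin
  nonempty := hne
  R w v := v ∈ traceClass w
  equiv := ⟨fun _ => rfl, Eq.symm, fun huv hvw => hvw.trans huv⟩
  V w := {p | atom p ∈ w.1}
  N := traceNbhds
  kbc _ _ hX := hX.1
  kbf := empty_notMem_traceNbhds hS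
  contains_class := traceClass_mem_traceNbhds htop
  agreeN _ _ := traceNbhds_congr
  kbm := fun _ _ ⟨_, χ, hχ, hX⟩ _ hXY hY => ⟨hY, χ, hχ, hX.trans hXY⟩

theorem mem_nsem_filtration_iff (hfin : S.Finite) (hS : SubformulaClosed S) (htop : B top ∈ S)
    (hne : Nonempty (traces S)) (hφ : φ ∈ S) (w : traces S) :
    w ∈ nsem (filtration hfin hS htop hne) φ ↔ φ ∈ w.1 := by
  induction φ generalizing w with
  | top =>
    obtain ⟨_, Γ, hΓ, rfl⟩ := w
    exact iff_of_true trivial ⟨hΓ.mem_of_kb (.taut fun _ => rfl), hφ⟩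
  | atom p => rfl
  | neg φ ih =>
    have hsub : φ ∈ S := hS _ hφ rfl
    refine (not_congr (ih hsub w)).trans ?_
    obtain ⟨_, Γ, hΓ, rfl⟩ := w
    simp only [Set.mem_inter_iff, hφ, hsub, and_true, hΓ.neg_mem_iff]
  | and φ ψ ihφ ihψ =>
    have hsubφ : φ ∈ S := hS _ hφ (Or.inl rfl)
    have hsubψ : ψ ∈ S := hS _ hφ (Or.inr rfl)
    refine (and_congr (ihφ hsubφ w) (ihψ hsubψ w)).trans ?_
    obtain ⟨_, Γ, hΓ, rfl⟩ := w
    simp only [Set.mem_inter_iff, hφ, hsubφ, hsubψ, and_true, hΓ.and_mem_iff]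
  | K φ ih =>
    have hsub : φ ∈ S := hS _ hφ rfl
    rw [K_mem_trace_iff hφ hsub]
    exact forall₂_congr fun v _ => ih hsub v
  | B φ ih =>
    have htruth : nsem (filtration hfin hS htop hne) φ = {v | φ ∈ v.1} :=
      Set.ext (ih (hS _ hφ rfl))
    rw [B_mem_trace_iff hS hφ, ← htruth]
    rfl

end Filtration

open Form in
theorem exists_notMem_nsem_of_not_kb {A : Type} {φ : Form A} (h : ¬KB φ) :
    ∃ (W : Type) (M : ENM W A) (w : W), w ∉ nsem M φ := by
  obtain ⟨Γ, -, hΓ, hφΓ⟩ := exists_isMaximalConsistent_notMem (mt Derives.kb_of_empty h)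
  obtain ⟨S, hfin, hS, hmem⟩ := exists_finite_subformulaClosed_mem (and φ (B top))
  have hφS : φ ∈ S := hS _ hmem (Or.inl rfl)
  have htop : B top ∈ S := hS _ hmem (Or.inr rfl)
  let w : traces S := ⟨Γ ∩ S, hΓ.inter_mem_traces⟩
  exact ⟨traces S, filtration hfin hS htop ⟨w⟩, w, fun hw =>
    hφΓ ((mem_nsem_filtration_iff hfin hS htop ⟨w⟩ hφS w).1 hw).1⟩

/-- `KB` is sound and complete with respect to the class of epistemic neighborhood
models. -/
theorem KB_neighborhood_soundness_completeness {A : Type} (φ : Form A) :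
    KB φ ↔ ∀ (W : Type) (M : ENM W A) (w : W), w ∈ nsem M φ := by
  refine ⟨fun h _ M w => h.sound M w, fun hvalid => ?_⟩
  by_contra h
  obtain ⟨W, M, w, hw⟩ := exists_notMem_nsem_of_not_kb h
  exact hw (hvalid W M w)
end
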